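/- arXiv:2401.10086 — 3 statements merged into one kernel-verified Lean document; each statement's English description precedes it below -/
import Mathlib

section
/- Let n ≥ 2 be an integer. For every ε > 0 there exists a constant C = C(n, ε) such that for all real H ≥ 2, the number of n×n matrices with all entries in E(H) and with determinant equal to 0 is at most C·H^{2+ε} if n = 2, at most C·H^{7+ε} if n = 3, and at most C·H^{n²−n/2+ε} if n ≥ 4. -/
/-- The set of Egyptian (unit) fractions `1/a` with `a` a nonzero integer, `|a| ≤ H`. -/
def Egyptian (H : ℝ) : Set ℚ := {x : ℚ | ∃ a : ℤ, a ≠ 0 ∧ (|a| : ℝ) ≤ H ∧ x = 1 / (a : ℚ)}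


lemma succ_le_two_rpow (ε : ℝ) (hε : 0 < ε) (a : ℕ) :
    (a + 1 : ℝ) ≤ (1 + 1 / (ε * Real.log 2)) * (2 : ℝ) ^ ((a : ℝ) * ε) := by
  have hl : 0 < Real.log 2 := Real.log_pos (by norm_num)
  have h1 : 1 + a * (ε * Real.log 2) ≤ (2 : ℝ) ^ ((a : ℝ) * ε) := by
    rw [Real.rpow_def_of_pos (by norm_num)]
    have := Real.add_one_le_exp (Real.log 2 * (a * ε))
    linarith
  have h2 : 0 < ε * Real.log 2 := by positivity
  set t := ε * Real.log 2
  calc (a + 1 : ℝ) ≤ (1 + 1 / t) * (1 + a * t) := by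
        have : (1 + 1 / t) * (1 + a * t) = 1 + a + 1 / t + a * t := by field_simp; ring
        rw [this]
        have : 0 ≤ 1 / t := by positivity
        have : 0 ≤ a * t := by positivity
        linarith
    _ ≤ _ := by gcongr

lemma divisor_bound (ε : ℝ) (hε : 0 < ε) :
    ∃ K : ℝ, 1 ≤ K ∧ ∀ m : ℕ, m ≠ 0 → (m.divisors.card : ℝ) ≤ K * (m : ℝ) ^ ε := by
  set L : ℝ := 1 + 1 / (ε * Real.log 2) with hL
  have hl : 0 < Real.log 2 := Real.log_pos (by norm_num)
  have hL1 : 1 ≤ L := by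
    have : 0 ≤ 1 / (ε * Real.log 2) := by positivity
    linarith
  set Q : ℕ := ⌈(2 : ℝ) ^ (1 / ε)⌉₊ with hQ
  refine ⟨L ^ Q, one_le_pow₀ hL1, fun m hm => ?_⟩
  rw [Nat.card_divisors hm]
  push_cast
  have hm2 : (m : ℝ) ^ ε = ∏ p ∈ m.primeFactors, ((p : ℝ) ^ (m.factorization p)) ^ ε := by
    rw [Real.finsetProd_rpow _ _ (fun i _ => by positivity)]
    congr 1
    conv_lhs => rw [← Nat.prod_factorization_pow_eq_self hm]
    simp [Finsupp.prod]
  have hstep : ∏ p ∈ m.primeFactors, ((m.factorization p : ℝ) + 1) ≤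
      ∏ p ∈ m.primeFactors, ((if p < Q then L else 1) * ((p : ℝ) ^ (m.factorization p)) ^ ε) := by
    apply Finset.prod_le_prod
    · intro i _; positivity
    · intro p hp
      have hpp : 2 ≤ p := (Nat.prime_of_mem_primeFactors hp).two_le
      have hp2 : (2 : ℝ) ≤ p := by exact_mod_cast hpp
      set a := m.factorization p
      have e1 : ((p : ℝ) ^ a) ^ ε = (p : ℝ) ^ ((a : ℝ) * ε) := by
        rw [Real.rpow_mul (by positivity), Real.rpow_natCast]
      split_ifs with h
      · rw [e1]
        refine (succ_le_two_rpow ε hε a).trans ?_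
        gcongr
      · push Not at h
        have h3 : (2 : ℝ) ^ (1 / ε) ≤ p := (Nat.le_ceil _).trans (by exact_mod_cast h)
        have h4 : (2 : ℝ) ≤ (p : ℝ) ^ ε := by
          calc (2 : ℝ) = ((2 : ℝ) ^ (1 / ε)) ^ ε := by
                rw [← Real.rpow_mul (by norm_num)]; field_simp; simp
            _ ≤ _ := by gcongr
        have h5 : ((p : ℝ) ^ a) ^ ε = ((p : ℝ) ^ ε) ^ a := by
          rw [e1, mul_comm, Real.rpow_mul (by positivity), Real.rpow_natCast]
        rw [h5, one_mul]
        calc (a + 1 : ℝ) ≤ 2 ^ a := by exact_mod_cast Nat.lt_two_pow_self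
          _ ≤ _ := by gcongr
  refine hstep.trans ?_
  rw [Finset.prod_mul_distrib, ← hm2]
  gcongr
  rw [Finset.prod_ite]
  simp only [Finset.prod_const, one_pow, mul_one]
  apply pow_le_pow_right₀ hL1
  calc _ ≤ (Finset.range Q).card := Finset.card_le_card (by intro x; simp)
    _ = Q := by simp

/-- polynomial-height version -/
lemma divisor_bound_poly (D : ℝ) (hD : 1 ≤ D) (B : ℕ) (ε : ℝ) (hε : 0 < ε) :
    ∃ K : ℝ, 1 ≤ K ∧ ∀ N : ℕ, 1 ≤ N → ∀ m : ℕ, m ≠ 0 → (m : ℝ) ≤ D * (N : ℝ) ^ B →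
      (m.divisors.card : ℝ) ≤ K * (N : ℝ) ^ ε := by
  obtain ⟨K, hK, h⟩ := divisor_bound (ε / (B + 1)) (by positivity)
  refine ⟨K * D ^ (ε / (B + 1)), ?_, ?_⟩
  · have : 1 ≤ D ^ (ε / (B + 1)) := Real.one_le_rpow hD (by positivity)
    nlinarith
  · intro N hN m hm hmD
    have hN' : (1 : ℝ) ≤ N := by exact_mod_cast hN
    refine (h m hm).trans ?_
    rw [mul_assoc]
    gcongr
    calc (m : ℝ) ^ (ε / (B + 1)) ≤ (D * (N : ℝ) ^ B) ^ (ε / (B + 1)) := by gcongr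
      _ = D ^ (ε / (B + 1)) * (N : ℝ) ^ ((B : ℝ) * (ε / (B + 1))) := by
        rw [Real.mul_rpow (by positivity) (by positivity), Real.rpow_mul (by positivity), Real.rpow_natCast]
      _ ≤ _ := by
        gcongr
        rw [mul_div_assoc', div_le_iff₀ (by positivity)]
        nlinarith

/-- nonzero integers of absolute value at most `N` -/
noncomputable def Box (N : ℕ) : Finset ℤ := (Finset.Icc (-(N : ℤ)) N).erase 0

lemma mem_Box {N : ℕ} {z : ℤ} : z ∈ Box N ↔ z ≠ 0 ∧ z.natAbs ≤ N := by
  simp only [Box, Finset.mem_erase, Finset.mem_Icc]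
  omega

lemma card_Box (N : ℕ) : (Box N).card = 2 * N := by
  rw [Box, Finset.card_erase_of_mem (by simp), Int.card_Icc]
  omega

/-- signed divisors -/
noncomputable def sdiv (m : ℕ) : Finset ℤ :=
  m.divisors.image (fun d : ℕ => (d : ℤ)) ∪ m.divisors.image (fun d : ℕ => -(d : ℤ))

lemma mem_sdiv {m : ℕ} (hm : m ≠ 0) {z : ℤ} (hz : z.natAbs ∣ m) : z ∈ sdiv m := by
  simp only [sdiv, Finset.mem_union, Finset.mem_image, Nat.mem_divisors]
  rcases Int.natAbs_eq z with h | h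
  · left; exact ⟨z.natAbs, ⟨hz, hm⟩, h.symm⟩
  · right; exact ⟨z.natAbs, ⟨hz, hm⟩, h.symm⟩

lemma card_sdiv_le (m : ℕ) : (sdiv m).card ≤ 2 * m.divisors.card := by
  refine (Finset.card_union_le _ _).trans ?_
  have h1 := Finset.card_image_le (s := m.divisors) (f := fun d : ℕ => (d : ℤ))
  have h2 := Finset.card_image_le (s := m.divisors) (f := fun d : ℕ => -(d : ℤ))
  omega

/-- the row `(1/x_j)` is orthogonal to `c` -/
def Kill {n : ℕ} (c x : Fin n → ℤ) : Prop := ∑ j, (c j : ℚ) / (x j : ℚ) = 0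

/-- support -/
def supp {n : ℕ} (c : Fin n → ℤ) : Finset (Fin n) := Finset.univ.filter (fun j => c j ≠ 0)

lemma mem_supp {n : ℕ} {c : Fin n → ℤ} {j : Fin n} : j ∈ supp c ↔ c j ≠ 0 := by simp [supp]

open Classical in
/-- solutions in the box -/
noncomputable def Sol {n : ℕ} (N : ℕ) (c : Fin n → ℤ) : Finset (Fin n → ℤ) :=
  (Fintype.piFinset fun _ => Box N).filter (Kill c)

lemma mem_Sol {n N : ℕ} {c x : Fin n → ℤ} : x ∈ Sol N c ↔ (∀ j, x j ∈ Box N) ∧ Kill c x := by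
  simp [Sol]

lemma kill_int {n : ℕ} {c x : Fin n → ℤ} (hx : ∀ j, x j ≠ 0) (h : Kill c x) :
    ∑ j ∈ supp c, c j * ∏ l ∈ (supp c).erase j, x l = 0 := by
  have h1 : ∑ j ∈ supp c, (c j : ℚ) / (x j : ℚ) = 0 := by
    rw [← h]
    apply Finset.sum_subset (Finset.subset_univ _)
    intro j _ hj
    rw [mem_supp, not_not] at hj
    simp [hj]
  have h2 : ((∑ j ∈ supp c, c j * ∏ l ∈ (supp c).erase j, x l : ℤ) : ℚ) =
      (∏ l ∈ supp c, (x l : ℚ)) * ∑ j ∈ supp c, (c j : ℚ) / (x j : ℚ) := by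
    push_cast
    rw [Finset.mul_sum]
    apply Finset.sum_congr rfl
    intro j hj
    rw [← Finset.mul_prod_erase _ _ hj]
    have : (x j : ℚ) ≠ 0 := by exact_mod_cast hx j
    field_simp
  rw [h1, mul_zero] at h2
  exact_mod_cast h2

/-- product of the entries in the support -/
def PP {n : ℕ} (c x : Fin n → ℤ) : ℕ := ∏ j ∈ supp c, (x j).natAbs

lemma PP_sq {n : ℕ} {c x : Fin n → ℤ} (hx : ∀ j, x j ≠ 0) (h : Kill c x) {p : ℕ}
    (hp : p.Prime) (hC : ¬ p ∣ PP c c) (hP : p ∣ PP c x) : p ^ 2 ∣ PP c x := by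
  obtain ⟨i, hi, hpi⟩ := (Prime.dvd_finsetProd_iff hp.prime _).1 hP
  by_cases hex : p ∣ ∏ l ∈ (supp c).erase i, (x l).natAbs
  · rw [PP, ← Finset.mul_prod_erase _ _ hi, sq]
    exact mul_dvd_mul hpi hex
  · exfalso
    have h0 := kill_int hx h
    rw [← Finset.add_sum_erase _ _ hi] at h0
    have hd : (p : ℤ) ∣ ∑ j ∈ (supp c).erase i, c j * ∏ l ∈ (supp c).erase j, x l := by
      apply Finset.dvd_sum
      intro j hj
      apply Dvd.dvd.mul_left
      refine (Int.natCast_dvd.2 hpi).trans (Finset.dvd_prod_of_mem _ ?_)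
      simp only [Finset.mem_erase] at hj ⊢
      exact ⟨hj.1.symm, hi⟩
    have hd2 : (p : ℤ) ∣ c i * ∏ l ∈ (supp c).erase i, x l := by
      rw [eq_neg_of_add_eq_zero_left h0]
      exact hd.neg_right
    rw [Int.natCast_dvd, Int.natAbs_mul, hp.dvd_mul] at hd2
    rcases hd2 with h1 | h1
    · exact hC (h1.trans (Finset.dvd_prod_of_mem (fun j => (c j).natAbs) hi))
    · apply hex
      have : (∏ l ∈ (supp c).erase i, x l).natAbs = ∏ l ∈ (supp c).erase i, (x l).natAbs :=
        map_prod Int.natAbsHom _ _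
      rwa [this] at h1

lemma PP_ne_zero {n : ℕ} {c x : Fin n → ℤ} (hx : ∀ j ∈ supp c, x j ≠ 0) : PP c x ≠ 0 := by
  rw [PP, Finset.prod_ne_zero_iff]
  intro j hj
  simpa using hx j hj

lemma PP_self_ne_zero {n : ℕ} (c : Fin n → ℤ) : PP c c ≠ 0 :=
  PP_ne_zero fun _ hj => mem_supp.1 hj

lemma PP_le {n N : ℕ} {c x : Fin n → ℤ} (hx : ∀ j, (x j).natAbs ≤ N) :
    PP c x ≤ N ^ (supp c).card := by
  rw [PP]
  exact Finset.prod_le_pow_card _ _ _ (fun j _ => hx j)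

lemma PP_decomp {n : ℕ} {c x : Fin n → ℤ} (hx : ∀ j, x j ≠ 0) (h : Kill c x) :
    ∃ b a : ℕ, b ≠ 0 ∧ b ^ 2 * a = PP c x ∧ a ∣ b * PP c c := by
  have h0 : PP c x ≠ 0 := PP_ne_zero fun j _ => hx j
  obtain ⟨a, b, ha, hb, hab, hsq⟩ := Nat.sq_mul_squarefree_of_pos (Nat.pos_of_ne_zero h0)
  refine ⟨b, a, hb.ne', hab, ?_⟩
  rw [← Nat.prod_primeFactors_of_squarefree hsq]
  apply Finset.prod_primes_dvd
  · intro p hp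
    exact (Nat.prime_of_mem_primeFactors hp).prime
  · intro p hp
    have hpp := Nat.prime_of_mem_primeFactors hp
    have hpa := Nat.dvd_of_mem_primeFactors hp
    by_cases hC : p ∣ PP c c
    · exact hC.mul_left _
    · have h2 := PP_sq hx h hpp hC (hab ▸ hpa.mul_left _)
      rw [← hab, sq] at h2
      have h3 := hsq.dvd_of_squarefree_of_mul_dvd_mul_left h2
      exact (hpp.dvd_of_dvd_pow h3).mul_right _

lemma card_Sol_le {n N T : ℕ} (c : Fin n → ℤ)
    (hT : ∀ m : ℕ, m ≠ 0 → m ≤ N ^ (supp c).card * PP c c → m.divisors.card ≤ T) :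
    (Sol N c).card ≤ ((2 * T) ^ (supp c).card * (2 * N) ^ (n - (supp c).card)) *
      (Nat.sqrt (N ^ (supp c).card) * T) := by
  classical
  set k := (supp c).card with hk
  have hC := PP_self_ne_zero c
  have hC1 : 1 ≤ PP c c := Nat.one_le_iff_ne_zero.2 hC
  let t : Finset ℕ := (Finset.Icc 1 (Nat.sqrt (N ^ k))).biUnion
    (fun b => (b * PP c c).divisors.image (fun a => b ^ 2 * a))
  have ht : t.card ≤ Nat.sqrt (N ^ k) * T := by
    have := Finset.card_biUnion_le_card_mul (Finset.Icc 1 (Nat.sqrt (N ^ k)))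
      (fun b => (b * PP c c).divisors.image (fun a => b ^ 2 * a)) T ?_
    · simpa using this
    · intro b hb
      rw [Finset.mem_Icc] at hb
      refine Finset.card_image_le.trans (hT _ (mul_ne_zero (by omega) hC) ?_)
      exact Nat.mul_le_mul_right _ (hb.2.trans (Nat.sqrt_le_self _))
  refine le_trans ?_ (Nat.mul_le_mul_left _ ht)
  apply Finset.card_le_mul_card_image_of_maps_to (f := fun x => PP c x)
  · intro x hx
    obtain ⟨hb, hkill⟩ := mem_Sol.1 hx
    have hx0 : ∀ j, x j ≠ 0 := fun j => (mem_Box.1 (hb j)).1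
    obtain ⟨b, a, hb0, hab, hdvd⟩ := PP_decomp hx0 hkill
    have ha0 : a ≠ 0 := by
      rintro rfl
      exact PP_ne_zero (c := c) (fun j _ => hx0 j) (by simpa using hab.symm)
    simp only [t, Finset.mem_biUnion, Finset.mem_Icc, Finset.mem_image, Nat.mem_divisors]
    refine ⟨b, ⟨by omega, ?_⟩, a, ⟨hdvd, mul_ne_zero hb0 hC⟩, hab⟩
    rw [Nat.le_sqrt']
    have h1 : PP c x ≤ N ^ k := PP_le fun j => (mem_Box.1 (hb j)).2
    have : b ^ 2 * 1 ≤ b ^ 2 * a := Nat.mul_le_mul_left _ (by omega)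
    omega
  · intro P _
    rcases Finset.eq_empty_or_nonempty ((Sol N c).filter fun x => PP c x = P) with he | ⟨x0, hx0⟩
    · rw [he]; simp
    · rw [Finset.mem_filter, mem_Sol] at hx0
      have hP0 : P ≠ 0 := by
        rw [← hx0.2]; exact PP_ne_zero fun j _ => (mem_Box.1 (hx0.1.1 j)).1
      have hPN : P ≤ N ^ k := by
        rw [← hx0.2]; exact PP_le fun j => (mem_Box.1 (hx0.1.1 j)).2
      have hPT : P.divisors.card ≤ T := hT P hP0 (hPN.trans (Nat.le_mul_of_pos_right _ hC1))
      have hsub : (Sol N c).filter (fun x => PP c x = P) ⊆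
          Fintype.piFinset (fun j => if j ∈ supp c then sdiv P else Box N) := by
        intro x hx
        rw [Finset.mem_filter, mem_Sol] at hx
        rw [Fintype.mem_piFinset]
        intro j
        split_ifs with hj
        · apply mem_sdiv hP0
          rw [← hx.2]
          exact Finset.dvd_prod_of_mem (fun j => (x j).natAbs) hj
        · exact hx.1.1 j
      refine (Finset.card_le_card hsub).trans ?_
      rw [Fintype.card_piFinset]
      have : ∀ j : Fin n, (if j ∈ supp c then sdiv P else Box N).card =
          if j ∈ supp c then (sdiv P).card else 2 * N := by
        intro j; split_ifs <;> simp [card_Box]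
      simp_rw [this]
      rw [Finset.prod_ite, Finset.prod_const, Finset.prod_const]
      have e1 : (Finset.univ.filter fun j => j ∈ supp c).card = k := by
        rw [hk]; congr 1; ext; simp
      have e2 : (Finset.univ.filter fun j => ¬ j ∈ supp c).card = n - k := by
        have := Finset.card_filter_add_card_filter_not (s := (Finset.univ : Finset (Fin n))) (fun j => j ∈ supp c)
        rw [e1] at this
        rw [Finset.card_univ, Fintype.card_fin] at this
        omega
      rw [e1, e2]
      gcongr
      exact (card_sdiv_le P).trans (by omega)

lemma card_Sol_three {N T : ℕ} (c : Fin 3 → ℤ) (hc : ∀ j, c j ≠ 0)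
    (hT : ∀ m : ℕ, m ≠ 0 → m ≤ N ^ 3 * PP c c → m.divisors.card ≤ T) :
    (Sol N c).card ≤ (2 * T) * (2 * N) := by
  classical
  rw [← card_Box N]
  have hPP : PP c c = (c 0).natAbs * (c 1).natAbs * (c 2).natAbs := by
    have : supp c = Finset.univ := by ext j; simp [mem_supp, hc j]
    rw [PP, this, Fin.prod_univ_three]
  apply Finset.card_le_mul_card_image_of_maps_to (f := fun x => x 2)
  · intro x hx
    exact (mem_Sol.1 hx).1 2
  · intro z hz
    obtain ⟨hz0, hzN⟩ := mem_Box.1 hz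
    set m : ℕ := (c 0 * c 1 * z ^ 2).natAbs with hm
    have hm0 : m ≠ 0 := by
      rw [hm, Int.natAbs_ne_zero]
      exact mul_ne_zero (mul_ne_zero (hc 0) (hc 1)) (pow_ne_zero _ hz0)
    have hmT : m.divisors.card ≤ T := by
      apply hT m hm0
      rw [hm, hPP, Int.natAbs_mul, Int.natAbs_mul, Int.natAbs_pow]
      have h2 : 1 ≤ (c 2).natAbs := Nat.one_le_iff_ne_zero.2 (Int.natAbs_ne_zero.2 (hc 2))
      have hN1 : 1 ≤ N := by have := Int.natAbs_ne_zero.2 hz0; omega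
      calc (c 0).natAbs * (c 1).natAbs * z.natAbs ^ 2
          ≤ (c 0).natAbs * (c 1).natAbs * N ^ 3 := by
            apply Nat.mul_le_mul_left
            exact (Nat.pow_le_pow_left hzN 2).trans (Nat.pow_le_pow_right hN1 (by norm_num))
        _ ≤ ((c 0).natAbs * (c 1).natAbs * N ^ 3) * (c 2).natAbs := Nat.le_mul_of_pos_right _ h2
        _ = _ := by ring
    refine le_trans ?_ ((card_sdiv_le m).trans (Nat.mul_le_mul_left 2 hmT))
    have key : ∀ x ∈ (Sol N c).filter (fun x => x 2 = z),
        x 0 ≠ 0 ∧ x 1 ≠ 0 ∧ x 2 = z ∧ c 0 * x 1 * z + c 1 * x 0 * z + c 2 * x 0 * x 1 = 0 := by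
      intro x hx
      rw [Finset.mem_filter, mem_Sol] at hx
      obtain ⟨⟨hb, hk⟩, h2⟩ := hx
      have h0 : x 0 ≠ 0 := (mem_Box.1 (hb 0)).1
      have h1 : x 1 ≠ 0 := (mem_Box.1 (hb 1)).1
      refine ⟨h0, h1, h2, ?_⟩
      rw [Kill, Fin.sum_univ_three, h2] at hk
      have q0 : (x 0 : ℚ) ≠ 0 := by exact_mod_cast h0
      have q1 : (x 1 : ℚ) ≠ 0 := by exact_mod_cast h1
      have qz : (z : ℚ) ≠ 0 := by exact_mod_cast hz0
      field_simp at hk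
      have : ((c 0 * x 1 * z + c 1 * x 0 * z + c 2 * x 0 * x 1 : ℤ) : ℚ) = 0 := by
        push_cast; linarith
      exact_mod_cast this
    apply Finset.card_le_card_of_injOn (fun x => c 2 * x 0 + c 0 * z)
    · intro x hx
      obtain ⟨h0, h1, h2, he⟩ := key x hx
      apply mem_sdiv hm0
      rw [hm, Int.natAbs_dvd_natAbs]
      refine ⟨c 2 * x 1 + c 1 * z, ?_⟩
      linear_combination (-c 2) * he
    · intro x hx y hy hxy
      obtain ⟨h0, h1, h2, he⟩ := key x hx
      obtain ⟨h0', h1', h2', he'⟩ := key y hy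
      have hxy' : c 2 * x 0 + c 0 * z = c 2 * y 0 + c 0 * z := hxy
      have e0 : x 0 = y 0 := mul_left_cancel₀ (hc 2) (by linarith)
      have e1 : x 1 = y 1 := by
        have hA : (c 0 * z + c 2 * x 0) * (x 1 - y 1) = 0 := by
          rw [← e0] at he'
          linear_combination he - he'
        rcases mul_eq_zero.1 hA with h | h
        · exfalso
          have : c 1 * x 0 * z = 0 := by linear_combination he - x 1 * h
          exact mul_ne_zero (mul_ne_zero (hc 1) h0) hz0 this
        · linarith
      ext j
      fin_cases j
      · simp [e0]
      · simp [e1]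
      · simp [h2, h2']

/-- rows `R` and columns `S` certify the singularity of `(1/a_ij)` -/
def Good {n : ℕ} (a : Fin n → Fin n → ℤ) (R S : Finset (Fin n)) (X : ℕ) : Prop :=
  (∃ c : Fin n → ℤ, c ≠ 0 ∧ supp c ⊆ S ∧ (∀ j, (c j).natAbs ≤ X) ∧ ∀ i ∈ R, Kill c (a i)) ∧
  (∀ c : Fin n → ℤ, c ≠ 0 → supp c ⊆ S → (∀ i ∈ R, Kill c (a i)) →
    supp c = S ∧ ∀ i, Kill c (a i))

section siegel
attribute [local instance] Matrix.seminormedAddCommGroup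

lemma siegel_one {α β : Type} [Fintype α] [Fintype β] (A : Matrix α β ℤ) (Y : ℕ) (hY : 1 ≤ Y)
    (hA : ∀ i j, (A i j).natAbs ≤ Y) (hm : 0 < Fintype.card α)
    (hn : Fintype.card α + 1 = Fintype.card β) :
    ∃ t : β → ℤ, t ≠ 0 ∧ A.mulVec t = 0 ∧
      ∀ j, (t j).natAbs ≤ (Fintype.card β * Y) ^ (Fintype.card α) := by
  obtain ⟨t, ht0, ht, hb⟩ := Int.Matrix.exists_ne_zero_int_vec_norm_le A (by omega) hm
  refine ⟨t, ht0, ht, fun j => ?_⟩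
  have h1 : ((Fintype.card β : ℝ) - Fintype.card α) = 1 := by
    rw [← hn]; push_cast; ring
  rw [h1, div_one, Real.rpow_natCast] at hb
  have h2 : ‖A‖ ≤ Y := by
    rw [Matrix.norm_le_iff (by positivity)]
    intro i j
    rw [Int.norm_eq_abs, ← Int.cast_abs, Int.abs_eq_natAbs]
    exact_mod_cast hA i j
  have h3 : max 1 ‖A‖ ≤ (Y : ℝ) := max_le (by exact_mod_cast hY) h2
  have h4 : ‖t j‖ ≤ ((Fintype.card β : ℝ) * Y) ^ (Fintype.card α) := by
    refine (norm_le_pi_norm t j).trans (hb.trans ?_)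
    gcongr
  rw [Int.norm_eq_abs, ← Int.cast_abs, Int.abs_eq_natAbs] at h4
  exact_mod_cast h4
end siegel

lemma exists_good {n N : ℕ} (hN : 1 ≤ N) (hn : 1 ≤ n) (a : Fin n → Fin n → ℤ)
    (ha : ∀ i j, a i j ∈ Box N)
    (hdet : (Matrix.of fun i j => (1 : ℚ) / (a i j : ℚ)).det = 0) :
    ∃ R S : Finset (Fin n), 2 ≤ S.card ∧ R.card + 1 = S.card ∧ Good a R S ((n * N ^ n) ^ n) := by
  classical
  have ha0 : ∀ i j, (a i j : ℚ) ≠ 0 := fun i j => by exact_mod_cast (mem_Box.1 (ha i j)).1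
  -- rational kernel
  let Ker : Set (Fin n → ℚ) := {v | v ≠ 0 ∧ ∀ i, ∑ j, v j / (a i j : ℚ) = 0}
  let sp : (Fin n → ℚ) → Finset (Fin n) := fun v => Finset.univ.filter (fun j => v j ≠ 0)
  have hex : ∃ k, ∃ v ∈ Ker, (sp v).card = k := by
    obtain ⟨v, hv0, hv⟩ := Matrix.exists_mulVec_eq_zero_iff.2 hdet
    refine ⟨_, v, ⟨hv0, fun i => ?_⟩, rfl⟩
    have := congrFun hv i
    simp only [Matrix.mulVec, dotProduct, Matrix.of_apply, Pi.zero_apply] at this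
    rw [← this]
    apply Finset.sum_congr rfl
    intro j _
    ring
  obtain ⟨v, ⟨hv0, hv⟩, hvk⟩ := Nat.find_spec hex
  have hmin : ∀ w ∈ Ker, (sp v).card ≤ (sp w).card := fun w hw => by
    rw [hvk]; exact Nat.find_min' hex ⟨w, hw, rfl⟩
  set S := sp v with hS
  have hvS : ∀ j, j ∉ S → v j = 0 := fun j hj => by simpa [hS, sp] using hj
  -- S has at least two elements
  have hS2 : 2 ≤ S.card := by
    by_contra hlt
    obtain ⟨j, hj⟩ := Function.ne_iff.1 hv0
    have hjS : j ∈ S := by simpa [hS, sp] using hj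
    have hS1 : S.card = 1 := by
      have := Finset.card_pos.2 ⟨j, hjS⟩
      omega
    obtain ⟨j', hj'⟩ := Finset.card_eq_one.1 hS1
    have h0 := hv ⟨0, hn⟩
    rw [← Finset.sum_subset (Finset.subset_univ S) (fun j _ hj => by simp [hvS j hj]), hj',
      Finset.sum_singleton] at h0
    rw [hj', Finset.mem_singleton] at hjS
    subst hjS
    exact (div_ne_zero hj (ha0 _ _)) h0
  -- restricted rows
  let r : Fin n → (S → ℚ) := fun i j => 1 / (a i j : ℚ)
  let Φ : (Fin n → ℚ) → ((S → ℚ) →ₗ[ℚ] ℚ) := fun u => ∑ j : S, u j • LinearMap.proj j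
  have hΦ : ∀ u w, Φ u w = ∑ j : S, u j * w j := by
    intro u w
    simp [Φ, LinearMap.sum_apply]
  have hΦr : ∀ u : Fin n → ℚ, (∀ j, j ∉ S → u j = 0) → ∀ i,
      Φ u (r i) = ∑ j, u j / (a i j : ℚ) := by
    intro u hu i
    rw [hΦ, ← Finset.sum_subset (Finset.subset_univ S) (fun j _ hj => by simp [hu j hj]),
      ← Finset.sum_coe_sort S]
    apply Finset.sum_congr rfl
    intro j _
    simp only [r]
    ring
  obtain ⟨κ, e, he, hspan, hli⟩ := exists_linearIndependent' ℚ r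
  have : Finite κ := Finite.of_injective e he
  have := Fintype.ofFinite κ
  have hlt : Fintype.card κ < S.card := by
    have h1 := finrank_span_eq_card hli
    rw [hspan] at h1
    have hle : Submodule.span ℚ (Set.range r) ≤ LinearMap.ker (Φ v) := by
      rw [Submodule.span_le]
      rintro _ ⟨i, rfl⟩
      simp only [SetLike.mem_coe, LinearMap.mem_ker]
      rw [hΦr v hvS, hv i]
    have hne : LinearMap.ker (Φ v) < ⊤ := by
      rw [lt_top_iff_ne_top]
      intro htop
      obtain ⟨j, hj⟩ := Function.ne_iff.1 hv0
      have hjS : j ∈ S := by simpa [hS, sp] using hj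
      have : Pi.single (⟨j, hjS⟩ : S) (1 : ℚ) ∈ LinearMap.ker (Φ v) := by rw [htop]; trivial
      rw [LinearMap.mem_ker, hΦ] at this
      simp [Pi.single_apply] at this
      exact hj this
    have h2 := Submodule.finrank_lt (lt_of_le_of_lt hle hne).ne
    rw [h1] at h2
    simpa using h2
  obtain ⟨R, hR0, hRc⟩ := Finset.exists_superset_card_eq (s := Finset.univ.image e) (n := S.card - 1)
    (by
      have := Finset.card_image_le (s := (Finset.univ : Finset κ)) (f := e)
      rw [Finset.card_univ] at this
      omega)
    (by have := Finset.card_le_univ S; omega)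
  have hRS : R.card + 1 = S.card := by omega
  -- killing by R implies killing by everything
  have hall : ∀ c : Fin n → ℤ, supp c ⊆ S → (∀ i ∈ R, Kill c (a i)) → ∀ i, Kill c (a i) := by
    intro c hc hk i
    have hc0 : ∀ j, j ∉ S → (c j : ℚ) = 0 := by
      intro j hj
      by_contra h
      exact hj (hc (mem_supp.2 (by exact_mod_cast h)))
    have hle : Submodule.span ℚ (Set.range r) ≤ LinearMap.ker (Φ fun j => (c j : ℚ)) := by
      rw [← hspan, Submodule.span_le]
      rintro _ ⟨x, rfl⟩
      simp only [SetLike.mem_coe, LinearMap.mem_ker, Function.comp]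
      rw [hΦr _ hc0]
      exact hk _ (hR0 (Finset.mem_image_of_mem _ (Finset.mem_univ _)))
    have h3 := hle (Submodule.subset_span ⟨i, rfl⟩)
    rw [LinearMap.mem_ker, hΦr _ hc0] at h3
    exact h3
  refine ⟨R, S, hS2, hRS, ?_, ?_⟩
  · -- Siegel
    let B : R → S → ℤ := fun i j => ∏ l ∈ Finset.univ.erase (j : Fin n), a i l
    obtain ⟨t, ht0, ht, htb⟩ := siegel_one (Matrix.of B) (N ^ n) (Nat.one_le_pow _ _ hN) (by
      intro i j
      rw [Matrix.of_apply]
      have : (B i j).natAbs = ∏ l ∈ Finset.univ.erase (j : Fin n), (a i l).natAbs :=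
        map_prod Int.natAbsHom _ _
      rw [this]
      refine (Finset.prod_le_pow_card _ _ N (fun l _ => (mem_Box.1 (ha i l)).2)).trans ?_
      apply Nat.pow_le_pow_right hN
      exact (Finset.card_le_univ _).trans (by simp)) (by rw [Fintype.card_coe]; omega) (by simpa using hRS)
    let c : Fin n → ℤ := fun j => if h : j ∈ S then t ⟨j, h⟩ else 0
    have hcS : ∀ j : S, c j = t j := fun j => by simp [c]
    have hcn : ∀ j, j ∉ S → c j = 0 := fun j hj => by simp [c, hj]
    refine ⟨c, ?_, ?_, ?_, ?_⟩
    · intro h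
      apply ht0
      ext j
      rw [← hcS j, h]; rfl
    · intro j hj
      by_contra h
      exact mem_supp.1 hj (hcn j h)
    · have hSn : S.card ≤ n := (Finset.card_le_univ S).trans (by simp)
      intro j
      by_cases hj : j ∈ S
      · rw [hcS ⟨j, hj⟩]
        refine (htb ⟨j, hj⟩).trans ?_
        simp only [Fintype.card_coe]
        calc (S.card * N ^ n) ^ R.card ≤ (n * N ^ n) ^ R.card := by gcongr
          _ ≤ _ := Nat.pow_le_pow_right (Nat.mul_pos hn (Nat.pow_pos hN)) (by omega)
      · simp [hcn j hj]
    · intro i hi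
      have h1 := congrFun ht ⟨i, hi⟩
      simp only [Matrix.mulVec, dotProduct, Pi.zero_apply, Matrix.of_apply] at h1
      have h2 : ((∑ j : S, B ⟨i, hi⟩ j * t j : ℤ) : ℚ) = 0 := by rw [h1]; simp
      have h3 : ((∑ j : S, B ⟨i, hi⟩ j * t j : ℤ) : ℚ) =
          (∏ l, (a i l : ℚ)) * ∑ j, (c j : ℚ) / (a i j : ℚ) := by
        rw [← (hΦ (fun j => (c j : ℚ)) (r i)).symm.trans
          (hΦr (fun j => (c j : ℚ)) (fun j hj => by simp [hcn j hj]) i), Finset.mul_sum]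
        push_cast
        apply Finset.sum_congr rfl
        intro j _
        rw [hcS j, ← Finset.mul_prod_erase _ _ (Finset.mem_univ (j : Fin n))]
        simp only [B, r]
        push_cast
        have := ha0 i j
        field_simp
      rw [h3] at h2
      exact (mul_eq_zero.1 h2).resolve_left (Finset.prod_ne_zero_iff.2 fun l _ => ha0 i l)
  · intro c hc0 hcS hk
    have hkk := hall c hcS hk
    refine ⟨?_, hkk⟩
    apply Finset.eq_of_subset_of_card_le hcS
    have hmem : (fun j => (c j : ℚ)) ∈ Ker := by
      refine ⟨?_, hkk⟩
      intro h
      apply hc0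
      ext j
      have := congrFun h j
      simpa using this
    have := hmin _ hmem
    have e2 : sp (fun j => (c j : ℚ)) = supp c := by
      ext j; simp [sp, mem_supp]
    rwa [e2] at this

open Classical in
lemma card_good_le {n N X M : ℕ} (R S : Finset (Fin n))
    (hM : ∀ c : Fin n → ℤ, supp c = S → (∀ j, (c j).natAbs ≤ X) → (Sol N c).card ≤ M) :
    ((Fintype.piFinset fun _ : Fin n => Fintype.piFinset fun _ : Fin n => Box N).filter
      (fun a => Good a R S X)).card ≤ M ^ (n - R.card) * ((2 * N) ^ n) ^ R.card := by
  set F := (Fintype.piFinset fun _ : Fin n => Fintype.piFinset fun _ : Fin n => Box N).filter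
      (fun a => Good a R S X) with hF
  let rows : Finset (Fin n → ℤ) := Fintype.piFinset fun _ : Fin n => Box N
  have hrows : rows.card = (2 * N) ^ n := by
    simp [rows, Fintype.card_piFinset, card_Box]
  let t : Finset (Fin n → Fin n → ℤ) :=
    Fintype.piFinset (fun i => if i ∈ R then rows else {0})
  have cnt : ∀ (U : Fin n → Finset (Fin n → ℤ)) (p q : ℕ),
      (∀ i ∈ R, (U i).card ≤ p) → (∀ i ∉ R, (U i).card ≤ q) →
      (Fintype.piFinset U).card ≤ q ^ (n - R.card) * p ^ R.card := by
    intro U p q hp hq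
    rw [Fintype.card_piFinset]
    have : ∏ i, (U i).card ≤ ∏ i, (if i ∈ R then p else q) := by
      apply Finset.prod_le_prod' 
      intro i _
      split_ifs with h
      · exact hp i h
      · exact hq i h
    refine this.trans ?_
    rw [Finset.prod_ite, Finset.prod_const, Finset.prod_const]
    have e1 : (Finset.univ.filter fun j => j ∈ R).card = R.card := by
      congr 1; ext; simp
    have e2 : (Finset.univ.filter fun j => ¬ j ∈ R).card = n - R.card := by
      have := Finset.card_filter_add_card_filter_not (s := (Finset.univ : Finset (Fin n))) (fun j => j ∈ R)
      rw [e1, Finset.card_univ, Fintype.card_fin] at this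
      omega
    rw [e1, e2, mul_comm]
  have ht : t.card ≤ ((2 * N) ^ n) ^ R.card := by
    have := cnt (fun i => if i ∈ R then rows else {0}) ((2 * N) ^ n) 1
      (by intro i hi; simp [hi, hrows]) (by intro i hi; simp [hi])
    rwa [one_pow, one_mul] at this
  refine le_trans ?_ (Nat.mul_le_mul_left _ ht)
  apply Finset.card_le_mul_card_image_of_maps_to (f := fun a i => if i ∈ R then a i else 0)
  · intro a ha
    rw [hF, Finset.mem_filter, Fintype.mem_piFinset] at ha
    rw [Fintype.mem_piFinset]
    intro i
    by_cases hi : i ∈ R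
    · simpa [hi, rows] using ha.1 i
    · simp [hi]
  · intro b _
    rcases Finset.eq_empty_or_nonempty
      (F.filter fun a => (fun i => if i ∈ R then a i else 0) = b) with he | ⟨a0, ha0⟩
    · rw [he]; simp
    · have agree : ∀ a : Fin n → Fin n → ℤ, (fun i => if i ∈ R then a i else 0) = b →
          ∀ i ∈ R, a i = b i := by
        intro a hab i hi
        rw [← hab]; simp [hi]
      rw [Finset.mem_filter, hF, Finset.mem_filter] at ha0
      obtain ⟨⟨ha0b, ⟨c, hc0, hcS, hcX, hck⟩, hg2⟩, hab0⟩ := ha0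
      have hckb : ∀ i ∈ R, Kill c (b i) := by
        intro i hi
        rw [← agree a0 hab0 i hi]; exact hck i hi
      have hsupp := (hg2 c hc0 hcS hck).1
      have hsub : F.filter (fun a => (fun i => if i ∈ R then a i else 0) = b) ⊆
          Fintype.piFinset (fun i => if i ∈ R then {b i} else Sol N c) := by
        intro a ha
        rw [Finset.mem_filter, hF, Finset.mem_filter, Fintype.mem_piFinset] at ha
        obtain ⟨⟨hab, _, hg⟩, hb⟩ := ha
        have hk := (hg c hc0 hcS (fun i hi => by rw [agree a hb i hi]; exact hckb i hi)).2
        rw [Fintype.mem_piFinset]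
        intro i
        split_ifs with hi
        · simp [agree a hb i hi]
        · exact mem_Sol.2 ⟨Fintype.mem_piFinset.1 (hab i), hk i⟩
      refine (Finset.card_le_card hsub).trans ?_
      have := cnt (fun i => if i ∈ R then {b i} else Sol N c) 1 M
        (by intro i hi; simp [hi]) (by intro i hi; simp [hi]; exact hM c hsupp hcX)
      simpa using this

open Classical in
/-- integer matrices in the box with singular matrix of reciprocals -/
noncomputable def IntSing (n N : ℕ) : Finset (Fin n → Fin n → ℤ) :=
  (Fintype.piFinset fun _ : Fin n => Fintype.piFinset fun _ : Fin n => Box N).filter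
    (fun a => (Matrix.of fun i j => (1 : ℚ) / (a i j : ℚ)).det = 0)

lemma ncard_le_IntSing (n : ℕ) (H : ℝ) (hH : 0 ≤ H) :
    Set.ncard {A : Matrix (Fin n) (Fin n) ℚ | (∀ i j, A i j ∈ Egyptian H) ∧ A.det = 0} ≤
      (IntSing n ⌊H⌋₊).card := by
  classical
  let g : (Fin n → Fin n → ℤ) → Matrix (Fin n) (Fin n) ℚ :=
    fun a => Matrix.of fun i j => (1 : ℚ) / (a i j : ℚ)
  have hsub : {A : Matrix (Fin n) (Fin n) ℚ | (∀ i j, A i j ∈ Egyptian H) ∧ A.det = 0} ⊆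
      ((IntSing n ⌊H⌋₊).image g : Finset (Matrix (Fin n) (Fin n) ℚ)) := by
    rintro A ⟨hA, hdet⟩
    choose a ha0 haH hae using hA
    have hg : g a = A := by
      ext i j
      simp only [g, Matrix.of_apply]
      exact (hae i j).symm
    rw [Finset.mem_coe, Finset.mem_image]
    refine ⟨a, ?_, hg⟩
    rw [IntSing, Finset.mem_filter]
    refine ⟨?_, ?_⟩
    · rw [Fintype.mem_piFinset]
      intro i
      rw [Fintype.mem_piFinset]
      intro j
      rw [mem_Box]
      refine ⟨ha0 i j, Nat.le_floor ?_⟩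
      have := haH i j
      rwa [← Int.cast_abs, Int.abs_eq_natAbs, Int.cast_natCast] at this
    · change (g a).det = 0
      rw [hg]; exact hdet
  refine (Set.ncard_le_ncard hsub (Finset.finite_toSet _)).trans ?_
  rw [Set.ncard_coe_finset]
  exact Finset.card_image_le

open Classical in
lemma IntSing_le {n N X : ℕ} (hN : 1 ≤ N) (hn : 1 ≤ n) (hX : X = (n * N ^ n) ^ n) (Z : ℝ)
    (hZ0 : 0 ≤ Z)
    (hZ : ∀ R S : Finset (Fin n), 2 ≤ S.card → R.card + 1 = S.card →
      (((Fintype.piFinset fun _ : Fin n => Fintype.piFinset fun _ : Fin n => Box N).filter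
      (fun a => Good a R S X)).card : ℝ) ≤ Z) :
    ((IntSing n N).card : ℝ) ≤ (2 ^ n * 2 ^ n) * Z := by
  let U : Finset (Finset (Fin n) × Finset (Fin n)) :=
    Finset.univ.filter (fun q => 2 ≤ q.2.card ∧ q.1.card + 1 = q.2.card)
  let G : Finset (Fin n) × Finset (Fin n) → Finset (Fin n → Fin n → ℤ) := fun q =>
    (Fintype.piFinset fun _ : Fin n => Fintype.piFinset fun _ : Fin n => Box N).filter
      (fun a => Good a q.1 q.2 X)
  have hsub : IntSing n N ⊆ U.biUnion G := by
    intro a ha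
    rw [IntSing, Finset.mem_filter] at ha
    obtain ⟨R, S, h2, hRS, hg⟩ := exists_good hN hn a
      (fun i j => Fintype.mem_piFinset.1 (Fintype.mem_piFinset.1 ha.1 i) j) ha.2
    rw [Finset.mem_biUnion]
    refine ⟨(R, S), by simp [U, h2, hRS], ?_⟩
    simp only [G, Finset.mem_filter]
    exact ⟨ha.1, hX ▸ hg⟩
  have hU : U.card ≤ 2 ^ n * 2 ^ n := by
    refine (Finset.card_le_univ U).trans ?_
    simp
  calc ((IntSing n N).card : ℝ) ≤ ((U.biUnion G).card : ℝ) := by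
        exact_mod_cast Finset.card_le_card hsub
    _ ≤ ((∑ q ∈ U, (G q).card : ℕ) : ℝ) := by exact_mod_cast Finset.card_biUnion_le
    _ = ∑ q ∈ U, ((G q).card : ℝ) := by push_cast; rfl
    _ ≤ ∑ q ∈ U, Z := by
        apply Finset.sum_le_sum
        intro q hq
        simp only [U, Finset.mem_filter] at hq
        exact hZ q.1 q.2 hq.2.1 hq.2.2
    _ = U.card * Z := by simp
    _ ≤ _ := by
        gcongr
        exact_mod_cast hU

lemma pow_calc {n N T M r : ℕ} (hN : 1 ≤ N) (hT : 1 ≤ T) (hr : r ≤ n) (e E : ℝ)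
    (hM : (M : ℝ) ≤ 2 ^ n * (T : ℝ) ^ (n + 1) * (N : ℝ) ^ e)
    (he : e * ((n : ℝ) - r) + n * r ≤ E) :
    (M : ℝ) ^ (n - r) * ((2 * (N : ℝ)) ^ n) ^ r ≤
      2 ^ (n * n) * (T : ℝ) ^ ((n + 1) * n) * (N : ℝ) ^ E := by
  have hN' : (1 : ℝ) ≤ N := by exact_mod_cast hN
  have hT' : (1 : ℝ) ≤ T := by exact_mod_cast hT
  have hN0 : (0 : ℝ) < N := by linarith
  calc (M : ℝ) ^ (n - r) * ((2 * (N : ℝ)) ^ n) ^ r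
      ≤ (2 ^ n * (T : ℝ) ^ (n + 1) * (N : ℝ) ^ e) ^ (n - r) * ((2 * (N : ℝ)) ^ n) ^ r := by gcongr
    _ = 2 ^ (n * (n - r) + n * r) * (T : ℝ) ^ ((n + 1) * (n - r)) *
          ((N : ℝ) ^ (e * ((n - r : ℕ) : ℝ)) * (N : ℝ) ^ (((n * r : ℕ) : ℝ))) := by
        rw [Real.rpow_mul hN0.le, Real.rpow_natCast, Real.rpow_natCast]
        rw [pow_add (2 : ℝ) (n * (n - r)), pow_mul (2 : ℝ), pow_mul (2 : ℝ), pow_mul (T : ℝ),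
          pow_mul (N : ℝ)]
        simp only [mul_pow]
        ring
    _ = 2 ^ (n * n) * (T : ℝ) ^ ((n + 1) * (n - r)) *
          (N : ℝ) ^ (e * ((n : ℝ) - r) + n * r) := by
        rw [← mul_add, Nat.sub_add_cancel hr, ← Real.rpow_add hN0, Nat.cast_sub hr]
        push_cast; rfl
    _ ≤ _ := by
        gcongr
        omega

/-- main counting statement with abstract row bound -/
lemma final_count (n : ℕ) (hn : 1 ≤ n) (E : ℝ)
    (hrow : ∀ S : Finset (Fin n), 2 ≤ S.card → ∃ e : ℝ,
      e * ((n : ℝ) - ((S.card - 1 : ℕ) : ℝ)) + n * ((S.card - 1 : ℕ) : ℝ) ≤ E ∧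
      ∀ N T : ℕ, 1 ≤ N → 1 ≤ T → ∀ c : Fin n → ℤ, supp c = S →
        (∀ m : ℕ, m ≠ 0 → m ≤ N ^ n * PP c c → m.divisors.card ≤ T) →
        ((Sol N c).card : ℝ) ≤ 2 ^ n * (T : ℝ) ^ (n + 1) * (N : ℝ) ^ e) :
    ∀ ε > (0 : ℝ), ∃ C : ℝ, 0 ≤ C ∧ ∀ N : ℕ, 1 ≤ N →
      ((IntSing n N).card : ℝ) ≤ C * (N : ℝ) ^ (E + ε) := by
  classical
  intro ε hε
  have hn' : (1 : ℝ) ≤ n := by exact_mod_cast hn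
  set δ : ℝ := ε / (((n + 1) * n : ℕ) : ℝ) with hδ
  have hnn : (0 : ℝ) < (((n + 1) * n : ℕ) : ℝ) := by exact_mod_cast Nat.mul_pos (by omega) hn
  have hδ0 : 0 < δ := by positivity
  obtain ⟨K, hK1, hK⟩ := divisor_bound_poly ((n : ℝ) ^ (n * n)) (one_le_pow₀ hn')
    (n + n * (n * n)) δ hδ0
  refine ⟨(2 ^ n * 2 ^ n) * (2 ^ (n * n) * K ^ ((n + 1) * n)), by positivity, fun N hN => ?_⟩
  have hN' : (1 : ℝ) ≤ N := by exact_mod_cast hN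
  have hN0 : (0 : ℝ) < N := by linarith
  have hKN : 1 ≤ K * (N : ℝ) ^ δ := by
    have := Real.one_le_rpow hN' hδ0.le
    nlinarith
  set T : ℕ := ⌊K * (N : ℝ) ^ δ⌋₊ with hTdef
  have hT1 : 1 ≤ T := Nat.le_floor (by simpa using hKN)
  have hTle : (T : ℝ) ≤ K * (N : ℝ) ^ δ := Nat.floor_le (by linarith)
  set X : ℕ := (n * N ^ n) ^ n with hX
  have hX1 : 1 ≤ X := Nat.one_le_pow _ _ (Nat.mul_pos hn (Nat.pow_pos hN))
  have hcT : ∀ c : Fin n → ℤ, (∀ j, (c j).natAbs ≤ X) →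
      ∀ m : ℕ, m ≠ 0 → m ≤ N ^ n * PP c c → m.divisors.card ≤ T := by
    intro c hc m hm hmle
    apply Nat.le_floor
    apply hK N hN m hm
    have h1 : PP c c ≤ X ^ n := (PP_le hc).trans
      (Nat.pow_le_pow_right hX1 ((Finset.card_le_univ _).trans (by simp)))
    have h2 : m ≤ n ^ (n * n) * N ^ (n + n * (n * n)) := by
      calc m ≤ N ^ n * X ^ n := hmle.trans (Nat.mul_le_mul_left _ h1)
        _ = _ := by
          rw [hX, ← pow_mul, mul_pow, ← pow_mul, pow_add]
          ring
    exact_mod_cast h2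
  have hmain := IntSing_le hN hn hX (2 ^ (n * n) * (T : ℝ) ^ ((n + 1) * n) * (N : ℝ) ^ E)
    (by positivity) (by
      intro R S hS2 hRS
      obtain ⟨e, he, hsol⟩ := hrow S hS2
      set M : ℕ := ⌊(2 : ℝ) ^ n * (T : ℝ) ^ (n + 1) * (N : ℝ) ^ e⌋₊ with hMdef
      have hM : (M : ℝ) ≤ (2 : ℝ) ^ n * (T : ℝ) ^ (n + 1) * (N : ℝ) ^ e :=
        Nat.floor_le (by positivity)
      have h1 := card_good_le (N := N) (X := X) (M := M) R S (by
        intro c hcS hcX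
        apply Nat.le_floor
        exact hsol N T hN hT1 c hcS (hcT c hcX))
      have hrS : S.card - 1 = R.card := by omega
      rw [hrS] at he
      have h2 := pow_calc hN hT1 ((Finset.card_le_univ R).trans (by simp)) e E hM he
      refine le_trans ?_ h2
      have h3 : ((M ^ (n - R.card) * ((2 * N) ^ n) ^ R.card : ℕ) : ℝ) =
        (M : ℝ) ^ (n - R.card) * ((2 * (N : ℝ)) ^ n) ^ R.card := by push_cast; rfl
      rw [← h3]
      exact_mod_cast h1)
  refine hmain.trans ?_
  calc (2 ^ n * 2 ^ n : ℝ) * (2 ^ (n * n) * (T : ℝ) ^ ((n + 1) * n) * (N : ℝ) ^ E)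
      ≤ (2 ^ n * 2 ^ n : ℝ) * (2 ^ (n * n) * (K * (N : ℝ) ^ δ) ^ ((n + 1) * n) * (N : ℝ) ^ E) := by
        gcongr
    _ = (2 ^ n * 2 ^ n) * (2 ^ (n * n) * K ^ ((n + 1) * n)) *
          ((N : ℝ) ^ E * ((N : ℝ) ^ δ) ^ ((n + 1) * n)) := by
        rw [mul_pow]; ring
    _ = _ := by
        congr 1
        rw [← Real.rpow_natCast ((N : ℝ) ^ δ), ← Real.rpow_mul hN0.le, ← Real.rpow_add hN0, hδ,
          div_mul_cancel₀ _ (ne_of_gt hnn)]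

/-- the general row bound in real form -/
lemma row_bound {n N T : ℕ} (hN : 1 ≤ N) (hT1 : 1 ≤ T) (c : Fin n → ℤ)
    (hT : ∀ m : ℕ, m ≠ 0 → m ≤ N ^ n * PP c c → m.divisors.card ≤ T) :
    ((Sol N c).card : ℝ) ≤ 2 ^ n * (T : ℝ) ^ (n + 1) *
      (N : ℝ) ^ ((n : ℝ) - ((supp c).card : ℝ) / 2) := by
  have hN' : (1 : ℝ) ≤ N := by exact_mod_cast hN
  have hT' : (1 : ℝ) ≤ T := by exact_mod_cast hT1
  have hN0 : (0 : ℝ) < N := by linarith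
  have hkn : (supp c).card ≤ n := (Finset.card_le_univ _).trans (by simp)
  have h := card_Sol_le (N := N) (T := T) c (fun m hm hle => hT m hm (hle.trans
    (Nat.mul_le_mul_right _ (Nat.pow_le_pow_right hN hkn))))
  set k := (supp c).card
  have hsq : ((Nat.sqrt (N ^ k) : ℕ) : ℝ) ≤ (N : ℝ) ^ ((k : ℝ) / 2) := by
    have h1 : ((Nat.sqrt (N ^ k) : ℕ) : ℝ) ≤ Real.sqrt ((N ^ k : ℕ) : ℝ) := Real.nat_sqrt_le_real_sqrt
    refine h1.trans (le_of_eq ?_)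
    rw [Real.sqrt_eq_rpow]
    push_cast
    rw [← Real.rpow_natCast, ← Real.rpow_mul hN0.le]
    congr 1
    ring
  calc ((Sol N c).card : ℝ) ≤ ((((2 * T) ^ k * (2 * N) ^ (n - k)) * (Nat.sqrt (N ^ k) * T) : ℕ) : ℝ) := by
        exact_mod_cast h
    _ = ((2 * (T : ℝ)) ^ k * (2 * (N : ℝ)) ^ (n - k)) * (((Nat.sqrt (N ^ k) : ℕ) : ℝ) * T) := by
        push_cast; rfl
    _ ≤ ((2 * (T : ℝ)) ^ k * (2 * (N : ℝ)) ^ (n - k)) * ((N : ℝ) ^ ((k : ℝ) / 2) * T) := by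
        gcongr
    _ = 2 ^ (k + (n - k)) * (T : ℝ) ^ (k + 1) * ((N : ℝ) ^ (((n - k : ℕ)) : ℝ) * (N : ℝ) ^ ((k : ℝ) / 2)) := by
        rw [Real.rpow_natCast, mul_pow, mul_pow, pow_add, pow_succ]
        ring
    _ = 2 ^ n * (T : ℝ) ^ (k + 1) * (N : ℝ) ^ ((n : ℝ) - (k : ℝ) / 2) := by
        rw [← Real.rpow_add hN0, Nat.add_sub_cancel' hkn, Nat.cast_sub hkn]
        congr 2
        ring
    _ ≤ _ := by
        gcongr

lemma count_general (n : ℕ) (hn : 2 ≤ n) :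
    ∀ ε > (0 : ℝ), ∃ C : ℝ, 0 ≤ C ∧ ∀ N : ℕ, 1 ≤ N →
      ((IntSing n N).card : ℝ) ≤ C * (N : ℝ) ^ (((n : ℝ) ^ 2 - n / 2) + ε) := by
  apply final_count n (by omega)
  intro S hS2
  refine ⟨(n : ℝ) - (S.card : ℝ) / 2, ?_, ?_⟩
  · have hSn : S.card ≤ n := (Finset.card_le_univ _).trans (by simp)
    have h1 : (2 : ℝ) ≤ S.card := by exact_mod_cast hS2
    have h2 : (S.card : ℝ) ≤ n := by exact_mod_cast hSn
    rw [Nat.cast_sub (by omega)]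
    push_cast
    nlinarith [mul_nonneg (sub_nonneg.2 h2) (by linarith : (0 : ℝ) ≤ S.card - 1)]
  · intro N T hN hT c hc hd
    rw [← hc]
    exact row_bound hN hT c hd

lemma count_three :
    ∀ ε > (0 : ℝ), ∃ C : ℝ, 0 ≤ C ∧ ∀ N : ℕ, 1 ≤ N →
      ((IntSing 3 N).card : ℝ) ≤ C * (N : ℝ) ^ ((7 : ℝ) + ε) := by
  apply final_count 3 (by omega)
  intro S hS2
  have hSn : S.card ≤ 3 := (Finset.card_le_univ _).trans (by simp)
  obtain h | h : S.card = 2 ∨ S.card = 3 := by omega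
  · refine ⟨2, by rw [h]; norm_num, ?_⟩
    intro N T hN hT c hc hd
    have := row_bound hN hT c hd
    rw [hc, h] at this
    refine this.trans (le_of_eq ?_)
    norm_num
  · refine ⟨1, by rw [h]; norm_num, ?_⟩
    intro N T hN hT c hc hd
    have hS : S = Finset.univ := (Finset.card_eq_iff_eq_univ S).1 (by simpa using h)
    have h1 := card_Sol_three (N := N) (T := T) c
      (fun j => mem_supp.1 (by rw [hc, hS]; exact Finset.mem_univ j)) hd
    have hT' : (1 : ℝ) ≤ T := by exact_mod_cast hT
    calc ((Sol N c).card : ℝ) ≤ (((2 * T) * (2 * N) : ℕ) : ℝ) := by exact_mod_cast h1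
      _ = 4 * (T : ℝ) ^ 1 * N := by push_cast; ring
      _ ≤ 2 ^ 3 * (T : ℝ) ^ (3 + 1) * N := by
        gcongr
        · norm_num
        · norm_num
      _ = _ := by rw [Real.rpow_one]

lemma IntSing_two_le {N T : ℕ}
    (hT : ∀ m : ℕ, m ≠ 0 → m ≤ N ^ 2 → m.divisors.card ≤ T) :
    (IntSing 2 N).card ≤ (2 * T) * ((2 * N) * (2 * N)) := by
  classical
  rw [← card_Box N, ← Finset.card_product]
  have key : ∀ a ∈ IntSing 2 N, (∀ i j, a i j ∈ Box N) ∧ a 0 0 * a 1 1 = a 0 1 * a 1 0 := by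
    intro a ha
    rw [IntSing, Finset.mem_filter] at ha
    have hb : ∀ i j, a i j ∈ Box N :=
      fun i j => Fintype.mem_piFinset.1 (Fintype.mem_piFinset.1 ha.1 i) j
    refine ⟨hb, ?_⟩
    have h0 : ∀ i j, (a i j : ℚ) ≠ 0 := fun i j => by exact_mod_cast (mem_Box.1 (hb i j)).1
    have hd := ha.2
    rw [Matrix.det_fin_two] at hd
    simp only [Matrix.of_apply] at hd
    have h00 := h0 0 0
    have h01 := h0 0 1
    have h10 := h0 1 0
    have h11 := h0 1 1
    field_simp at hd
    have : (a 0 0 * a 1 1 : ℚ) = a 0 1 * a 1 0 := by linarith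
    exact_mod_cast this
  apply Finset.card_le_mul_card_image_of_maps_to (f := fun a => (a 0 0, a 1 1))
  · intro a ha
    rw [Finset.mem_product]
    exact ⟨(key a ha).1 0 0, (key a ha).1 1 1⟩
  · rintro ⟨x, y⟩ hxy
    rw [Finset.mem_product] at hxy
    obtain ⟨hx0, hxN⟩ := mem_Box.1 hxy.1
    obtain ⟨hy0, hyN⟩ := mem_Box.1 hxy.2
    simp only at hx0 hxN hy0 hyN
    have hm0 : (x * y).natAbs ≠ 0 := Int.natAbs_ne_zero.2 (mul_ne_zero hx0 hy0)
    have hmT : (x * y).natAbs.divisors.card ≤ T := by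
      apply hT _ hm0
      rw [Int.natAbs_mul, sq]
      exact Nat.mul_le_mul hxN hyN
    refine le_trans ?_ ((card_sdiv_le _).trans (Nat.mul_le_mul_left 2 hmT))
    have key2 : ∀ a ∈ (IntSing 2 N).filter (fun a => (a 0 0, a 1 1) = (x, y)),
        a 0 0 = x ∧ a 1 1 = y ∧ a 0 1 ≠ 0 ∧ x * y = a 0 1 * a 1 0 := by
      intro a ha
      rw [Finset.mem_filter, Prod.mk.injEq] at ha
      obtain ⟨ha, h1, h2⟩ := ha
      refine ⟨h1, h2, (mem_Box.1 ((key a ha).1 0 1)).1, ?_⟩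
      rw [← h1, ← h2]
      exact (key a ha).2
    apply Finset.card_le_card_of_injOn (fun a => a 0 1)
    · intro a ha
      obtain ⟨_, _, _, h⟩ := key2 a ha
      apply mem_sdiv hm0
      rw [Int.natAbs_dvd_natAbs]
      exact ⟨_, h⟩
    · intro a ha b hb hab
      obtain ⟨a1, a2, a3, a4⟩ := key2 a ha
      obtain ⟨b1, b2, b3, b4⟩ := key2 b hb
      have hab' : a 0 1 = b 0 1 := hab
      have h10 : a 1 0 = b 1 0 := by
        apply mul_left_cancel₀ a3
        rw [← a4, b4, hab']
      ext i j
      fin_cases i <;> fin_cases j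
      · simp [a1, b1]
      · simp [hab']
      · simp [h10]
      · simp [a2, b2]

lemma count_two :
    ∀ ε > (0 : ℝ), ∃ C : ℝ, 0 ≤ C ∧ ∀ N : ℕ, 1 ≤ N →
      ((IntSing 2 N).card : ℝ) ≤ C * (N : ℝ) ^ ((2 : ℝ) + ε) := by
  intro ε hε
  obtain ⟨K, hK1, hK⟩ := divisor_bound_poly 1 le_rfl 2 ε hε
  refine ⟨8 * K, by positivity, fun N hN => ?_⟩
  have hN0 : (0 : ℝ) < N := by exact_mod_cast hN
  set T : ℕ := ⌊K * (N : ℝ) ^ ε⌋₊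
  have hTle : (T : ℝ) ≤ K * (N : ℝ) ^ ε := Nat.floor_le (by positivity)
  have h := IntSing_two_le (N := N) (T := T) (by
    intro m hm hle
    apply Nat.le_floor
    apply hK N hN m hm
    rw [one_mul]
    exact_mod_cast hle)
  calc ((IntSing 2 N).card : ℝ) ≤ (((2 * T) * ((2 * N) * (2 * N)) : ℕ) : ℝ) := by exact_mod_cast h
    _ = 8 * (T : ℝ) * (N : ℝ) ^ (2 : ℝ) := by
      rw [Real.rpow_two]; push_cast; ring
    _ ≤ 8 * (K * (N : ℝ) ^ ε) * (N : ℝ) ^ (2 : ℝ) := by gcongr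
    _ = _ := by rw [Real.rpow_add hN0]; ring

lemma transfer (n : ℕ) (E : ℝ) (hE : 0 ≤ E) (C : ℝ) (hC : 0 ≤ C)
    (h : ∀ N : ℕ, 1 ≤ N → ((IntSing n N).card : ℝ) ≤ C * (N : ℝ) ^ E) (H : ℝ) (hH : H ≥ 2) :
    (Set.ncard {A : Matrix (Fin n) (Fin n) ℚ |
            (∀ i j, A i j ∈ Egyptian H) ∧ A.det = 0} : ℝ) ≤ C * H ^ E := by
  have h1 : (⌊H⌋₊ : ℝ) ≤ H := Nat.floor_le (by linarith)
  have h2 : 1 ≤ ⌊H⌋₊ := Nat.le_floor (by push_cast; linarith)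
  calc _ ≤ ((IntSing n ⌊H⌋₊).card : ℝ) := by
        exact_mod_cast ncard_le_IntSing n H (by linarith)
    _ ≤ C * (⌊H⌋₊ : ℝ) ^ E := h _ h2
    _ ≤ _ := by gcongr

theorem stmt13 (n : ℕ) (hn : n ≥ 2) :
    ∀ ε > (0 : ℝ), ∃ C : ℝ, ∀ H : ℝ, H ≥ 2 →
      (n = 2 →
        (Set.ncard {A : Matrix (Fin n) (Fin n) ℚ |
            (∀ i j, A i j ∈ Egyptian H) ∧ A.det = 0} : ℝ) ≤ C * H ^ ((2 : ℝ) + ε)) ∧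
      (n = 3 →
        (Set.ncard {A : Matrix (Fin n) (Fin n) ℚ |
            (∀ i j, A i j ∈ Egyptian H) ∧ A.det = 0} : ℝ) ≤ C * H ^ ((7 : ℝ) + ε)) ∧
      (n ≥ 4 →
        (Set.ncard {A : Matrix (Fin n) (Fin n) ℚ |
            (∀ i j, A i j ∈ Egyptian H) ∧ A.det = 0} : ℝ) ≤
          C * H ^ ((n ^ 2 : ℝ) - n / 2 + ε)) := by
  intro ε hε
  obtain h2 | h3 | h4 : n = 2 ∨ n = 3 ∨ 4 ≤ n := by omega
  · subst h2
    obtain ⟨C, hC, h⟩ := count_two ε hε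
    refine ⟨C, fun H hH => ⟨fun _ => transfer 2 _ (by linarith) C hC h H hH,
      fun h => by omega, fun h => by omega⟩⟩
  · subst h3
    obtain ⟨C, hC, h⟩ := count_three ε hε
    refine ⟨C, fun H hH => ⟨fun h => by omega,
      fun _ => transfer 3 _ (by linarith) C hC h H hH, fun h => by omega⟩⟩
  · obtain ⟨C, hC, h⟩ := count_general n hn ε hε
    refine ⟨C, fun H hH => ⟨fun h => by omega, fun h => by omega,
      fun _ => transfer n _ ?_ C hC h H hH⟩⟩
    have : (4 : ℝ) ≤ n := by exact_mod_cast h4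
    nlinarith
end

section
/- Let n ≥ 2 be an integer. For every ε > 0 there exists a constant C = C(n, ε) such that for all real H ≥ 2 and all monic polynomials f ∈ ℚ[X] of degree n, the number of n×n matrices with all entries in E(H) whose characteristic polynomial equals f is at most: C·H^{ε} if n = 2 and f ≠ X²; C·H^{3+ε} if n = 3; C·H^{n²/2−1/(2n−2)+ε} if n ≥ 4 and the coefficient of X^{n−1} in f is nonzero; and C·H^{n²/2+ε} if n ≥ 4 and the coefficient of X^{n−1} in f is zero. -/
theorem card_div_bound (ε : ℝ) (hε : 0 < ε) :
    ∃ C : ℝ, 1 ≤ C ∧ ∀ n : ℕ, n ≠ 0 → (n.divisors.card : ℝ) ≤ C * (n : ℝ) ^ ε := by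
  have hl2 : 0 < Real.log 2 := Real.log_pos (by norm_num)
  set K : ℝ := max 1 (1 / (ε * Real.log 2)) with hK
  have hK1 : 1 ≤ K := le_max_left _ _
  have hK2 : 1 / (ε * Real.log 2) ≤ K := le_max_right _ _
  have hK3 : 1 ≤ K * (ε * Real.log 2) := by
    rwa [div_le_iff₀ (by positivity)] at hK2
  obtain ⟨M, hM⟩ := exists_nat_ge ((2 : ℝ) ^ (1 / ε))
  refine ⟨K ^ M, one_le_pow₀ hK1, fun n hn => ?_⟩
  have key : ∀ p ∈ n.primeFactors, ((n.factorization p : ℝ) + 1) ≤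
      (if p < M then K else 1) * ((p : ℝ) ^ (n.factorization p)) ^ ε := by
    intro p hp
    have hp2 : (2 : ℝ) ≤ p := by exact_mod_cast (Nat.prime_of_mem_primeFactors hp).two_le
    set e := n.factorization p
    have hcomm : ((p : ℝ) ^ e) ^ ε = ((p : ℝ) ^ ε) ^ e := by
      rw [← Real.rpow_natCast, ← Real.rpow_natCast, ← Real.rpow_mul (by positivity),
        ← Real.rpow_mul (by positivity), mul_comm]
    rw [hcomm]
    split_ifs with h
    · have h1 : (1 : ℝ) + ε * Real.log 2 ≤ (p : ℝ) ^ ε := by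
        calc (1 : ℝ) + ε * Real.log 2 ≤ Real.exp (ε * Real.log 2) := by
              linarith [Real.add_one_le_exp (ε * Real.log 2)]
          _ = (2 : ℝ) ^ ε := by rw [Real.rpow_def_of_pos (by norm_num), mul_comm]
          _ ≤ _ := by gcongr
      have h2 : 1 + (e : ℝ) * (ε * Real.log 2) ≤ ((p : ℝ) ^ ε) ^ e :=
        (one_add_mul_le_pow (by nlinarith [mul_pos hε hl2]) e).trans (by gcongr)
      have he : (0 : ℝ) ≤ e := by positivity
      nlinarith
    · have h1 : (2 : ℝ) ≤ (p : ℝ) ^ ε := by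
        have : (2 : ℝ) ^ (1 / ε) ≤ p := hM.trans (by exact_mod_cast not_lt.mp h)
        calc (2 : ℝ) = ((2 : ℝ) ^ (1 / ε)) ^ ε := by
              rw [← Real.rpow_mul (by norm_num), one_div_mul_cancel hε.ne', Real.rpow_one]
          _ ≤ _ := by gcongr
      have h2 : (2 : ℝ) ^ e ≤ ((p : ℝ) ^ ε) ^ e := by gcongr
      have h3 : (e : ℝ) + 1 ≤ 2 ^ e := by exact_mod_cast Nat.lt_two_pow_self
      linarith
  rw [Nat.card_divisors hn]
  push_cast
  calc ∏ p ∈ n.primeFactors, ((n.factorization p : ℝ) + 1)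
      ≤ ∏ p ∈ n.primeFactors, ((if p < M then K else 1) * ((p : ℝ) ^ (n.factorization p)) ^ ε) :=
        Finset.prod_le_prod (fun _ _ => by positivity) key
    _ = (∏ p ∈ n.primeFactors, (if p < M then K else 1)) *
        (∏ p ∈ n.primeFactors, (p : ℝ) ^ (n.factorization p)) ^ ε := by
        rw [Finset.prod_mul_distrib, Real.finsetProd_rpow _ _ (fun _ _ => by positivity)]
    _ = (∏ p ∈ n.primeFactors, (if p < M then K else 1)) * (n : ℝ) ^ ε := by
        congr 2
        conv_rhs => rw [← Nat.prod_factorization_pow_eq_self hn]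
        simp [Finsupp.prod]
    _ ≤ K ^ M * (n : ℝ) ^ ε := by
        gcongr
        rw [Finset.prod_ite, Finset.prod_const, Finset.prod_const_one, mul_one]
        apply pow_le_pow_right₀ hK1
        calc _ ≤ (Finset.range M).card := Finset.card_le_card (by
                intro p hp; simp at hp ⊢; exact hp.2)
          _ = M := Finset.card_range M

theorem trace_sq_of_charpoly {n : ℕ} (A B : Matrix (Fin n) (Fin n) ℚ)
    (h : A.charpoly = B.charpoly) : (A * A).trace = (B * B).trace := by
  have ev : ∀ (A : Matrix (Fin n) (Fin n) ℚ) (t : ℚ), (A * A).charpoly.eval (t ^ 2) =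
      A.charpoly.eval t * ((-1) ^ n * A.charpoly.eval (-t)) := by
    intro A t
    simp only [Matrix.eval_charpoly]
    have h1 : ((-1 : ℚ) ^ n * (Matrix.scalar (Fin n) (-t) - A).det) =
        (Matrix.scalar (Fin n) t + A).det := by
      have := Matrix.det_neg (Matrix.scalar (Fin n) (-t) - A)
      rw [Fintype.card_fin] at this
      rw [← this]
      congr 1
      rw [neg_sub, map_neg, sub_neg_eq_add, add_comm]
    rw [h1, ← Matrix.det_mul]
    congr 1
    have hc : Commute (Matrix.scalar (Fin n) t) A := Matrix.scalar_commute t (fun _ => mul_comm _ _) A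
    rw [pow_two, map_mul, sub_mul, mul_add, mul_add, hc.eq]
    abel
  have : (A * A).charpoly = (B * B).charpoly := by
    apply Polynomial.eq_of_infinite_eval_eq
    apply Set.Infinite.mono (s := Set.range (fun k : ℕ => ((k : ℚ)) ^ 2))
    · rintro _ ⟨k, rfl⟩
      simp only [Set.mem_ofPred_eq, ev, h]
    · apply Set.infinite_range_of_injective
      intro a b hab
      simp only at hab
      have : a ^ 2 = b ^ 2 := by exact_mod_cast hab
      exact Nat.pow_left_injective (n := 2) (by norm_num) this
  rw [Matrix.trace_eq_neg_charpoly_nextCoeff, Matrix.trace_eq_neg_charpoly_nextCoeff, this]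

theorem fiber_card {α β : Type*} (S : Set α) (hS : S.Finite) (f : α → β) (T : Set β)
    (hT : T.Finite) (hf : ∀ a ∈ S, f a ∈ T) (M B : ℝ) (hB0 : 0 ≤ B) (hM : (T.ncard : ℝ) ≤ M)
    (hB : ∀ a ∈ S, (({x | x ∈ S ∧ f x = f a}).ncard : ℝ) ≤ B) :
    (S.ncard : ℝ) ≤ M * B := by
  classical
  refine le_trans ?_ (mul_le_mul_of_nonneg_right hM hB0)
  lift S to Finset α using hS
  lift T to Finset β using hT
  simp only [Set.ncard_coe_finset]
  have h1 : S.card ≤ ⌊B⌋₊ * T.card := by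
    apply Finset.card_le_mul_card_image_of_maps_to (f := f) (fun a ha => hf a ha)
    intro b hb
    by_cases hex : ∃ a ∈ S, f a = b
    · obtain ⟨a, ha, rfl⟩ := hex
      apply Nat.le_floor
      have := hB a ha
      rw [← Set.ncard_coe_finset]
      have e : ((S.filter (fun x => f x = f a) : Finset α) : Set α) =
        {x | x ∈ (S : Set α) ∧ f x = f a} := by ext x; simp
      rw [e]
      exact this
    · rw [Finset.filter_eq_empty_iff.mpr]
      · simp
      · intro x hx hh
        exact hex ⟨x, hx, hh⟩
  calc (S.card : ℝ) ≤ (⌊B⌋₊ : ℝ) * T.card := by exact_mod_cast h1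
    _ ≤ B * T.card := by gcongr; exact Nat.floor_le hB0
    _ = _ := mul_comm _ _

theorem div_bound_pow (ε : ℝ) (hε : 0 < ε) (k : ℕ) :
    ∃ C : ℝ, 1 ≤ C ∧ ∀ N : ℕ, 1 ≤ N → ∀ M : ℕ, M ≠ 0 → M ≤ N ^ k →
      (M.divisors.card : ℝ) ≤ C * (N : ℝ) ^ ε := by
  obtain ⟨C, hC1, hC⟩ := card_div_bound (ε / (k + 1)) (by positivity)
  refine ⟨C, hC1, fun N hN M hM hMN => (hC M hM).trans ?_⟩
  have hN' : (1 : ℝ) ≤ N := by exact_mod_cast hN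
  have h1 : (M : ℝ) ≤ (N : ℝ) ^ (k : ℝ) := by
    rw [Real.rpow_natCast]; exact_mod_cast hMN
  gcongr
  calc (M : ℝ) ^ (ε / (k + 1)) ≤ ((N : ℝ) ^ (k : ℝ)) ^ (ε / (k + 1)) := by gcongr
    _ = (N : ℝ) ^ (k * (ε / (k + 1))) := by rw [← Real.rpow_mul (by positivity)]
    _ ≤ (N : ℝ) ^ ε := by
      apply Real.rpow_le_rpow_of_exponent_le hN'
      rw [mul_div_assoc', div_le_iff₀ (by positivity)]
      nlinarith

theorem signed_div {ι : Type} [Fintype ι] (M : ℕ) (hM : M ≠ 0) :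
    {a : ι → ℤ | ∀ i, a i ∣ (M : ℤ)}.Finite ∧
    {a : ι → ℤ | ∀ i, a i ∣ (M : ℤ)}.ncard ≤ (2 * M.divisors.card) ^ Fintype.card ι := by
  classical
  set D : Finset ℤ := M.divisors.image (fun x : ℕ => (x : ℤ)) ∪
    M.divisors.image (fun x : ℕ => -(x : ℤ)) with hD
  have hDc : D.card ≤ 2 * M.divisors.card := by
    rw [two_mul]
    exact (Finset.card_union_le _ _).trans (add_le_add Finset.card_image_le Finset.card_image_le)
  have hsub : {a : ι → ℤ | ∀ i, a i ∣ (M : ℤ)} ⊆ (Fintype.piFinset (fun _ : ι => D) : Set (ι → ℤ)) := by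
    intro a ha
    simp only [Finset.mem_coe, Fintype.mem_piFinset]
    intro i
    have h1 : (a i).natAbs ∈ M.divisors := by
      rw [Nat.mem_divisors]
      refine ⟨?_, hM⟩
      have := Int.natAbs_dvd_natAbs.mpr (ha i)
      simpa using this
    rw [hD, Finset.mem_union, Finset.mem_image, Finset.mem_image]
    rcases Int.natAbs_eq (a i) with h | h
    · exact Or.inl ⟨_, h1, h.symm⟩
    · exact Or.inr ⟨_, h1, h.symm⟩
  refine ⟨(Finset.finite_toSet _).subset hsub, ?_⟩
  refine (Set.ncard_le_ncard hsub (Finset.finite_toSet _)).trans ?_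
  rw [Set.ncard_coe_finset, Fintype.card_piFinset, Finset.prod_const, Finset.card_univ]
  exact Nat.pow_le_pow_left hDc _

theorem signed_div_bound (ι : Type) [Fintype ι] (ε : ℝ) (hε : 0 < ε) (k : ℕ) :
    ∃ C : ℝ, 1 ≤ C ∧ ∀ N : ℕ, 1 ≤ N → ∀ M : ℕ, M ≠ 0 → M ≤ N ^ k →
      ({a : ι → ℤ | ∀ i, a i ∣ (M : ℤ)}.ncard : ℝ) ≤ C * (N : ℝ) ^ ε := by
  obtain ⟨C, hC1, hC⟩ := div_bound_pow (ε / (Fintype.card ι + 1)) (by positivity) k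
  refine ⟨(2 * C) ^ Fintype.card ι, one_le_pow₀ (by linarith), fun N hN M hM hMN => ?_⟩
  have hN' : (1 : ℝ) ≤ N := by exact_mod_cast hN
  have h1 := hC N hN M hM hMN
  calc ({a : ι → ℤ | ∀ i, a i ∣ (M : ℤ)}.ncard : ℝ)
      ≤ (2 * (M.divisors.card : ℝ)) ^ Fintype.card ι := by exact_mod_cast (signed_div M hM).2
    _ ≤ (2 * (C * (N : ℝ) ^ (ε / (Fintype.card ι + 1)))) ^ Fintype.card ι := by gcongr
    _ = (2 * C) ^ Fintype.card ι * (N : ℝ) ^ (ε / (Fintype.card ι + 1) * Fintype.card ι) := by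
      rw [← mul_assoc, mul_pow, Real.rpow_mul (by positivity), Real.rpow_natCast]
    _ ≤ _ := by
      gcongr
      rw [div_mul_eq_mul_div, div_le_iff₀ (by positivity)]
      nlinarith

/-- Tuples of nonzero integers bounded by `N` whose reciprocals sum to `t`. -/
def USol (ι : Type) [Fintype ι] (N : ℕ) (t : ℚ) : Set (ι → ℤ) :=
  {a | (∀ i, a i ≠ 0 ∧ (a i).natAbs ≤ N) ∧ ∑ i, (1 : ℚ) / (a i : ℚ) = t}

theorem box_finite (ι : Type) [Fintype ι] (N : ℕ) :
    {a : ι → ℤ | ∀ i, (a i).natAbs ≤ N}.Finite := by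
  classical
  apply (Finset.finite_toSet (Fintype.piFinset (fun _ : ι => Finset.Icc (-(N : ℤ)) N))).subset
  intro a ha
  simp only [Finset.mem_coe, Fintype.mem_piFinset, Finset.mem_Icc]
  intro i
  have := ha i
  omega

theorem USol_finite (ι : Type) [Fintype ι] (N : ℕ) (t : ℚ) : (USol ι N t).Finite :=
  (box_finite ι N).subset (fun _ ha i => (ha.1 i).2)

/-- The product of the entries of a solution has a very restricted shape. -/
theorem USol_struct {ι : Type} [Fintype ι] {N : ℕ} {t : ℚ} {a : ι → ℤ} (ha : a ∈ USol ι N t) :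
    ∃ c b : ℕ, 0 < c ∧ 0 < b ∧ ∏ i, (a i).natAbs = t.den * (c ^ 2 * b) ∧ b ∣ t.den * c := by
  classical
  obtain ⟨hb, hs⟩ := ha
  set P : ℤ := ∏ i, a i with hP
  have hP0 : P ≠ 0 := Finset.prod_ne_zero_iff.mpr (fun i _ => (hb i).1)
  set Q : ι → ℤ := fun i => ∏ j ∈ Finset.univ.erase i, a j with hQ
  have hPQ : ∀ i, a i * Q i = P := fun i => Finset.mul_prod_erase _ _ (Finset.mem_univ i)
  have hsum : t * (P : ℚ) = ((∑ i, Q i : ℤ) : ℚ) := by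
    rw [← hs, Finset.sum_mul]
    push_cast
    apply Finset.sum_congr rfl
    intro i _
    have h0 : (a i : ℚ) ≠ 0 := by exact_mod_cast (hb i).1
    rw [← hPQ i]; push_cast; field_simp
  have hnd : t.num * P = t.den * ∑ i, Q i := by
    have hd : (t.den : ℚ) ≠ 0 := by exact_mod_cast t.den_nz
    have : (t.num : ℚ) * P = t.den * ((∑ i, Q i : ℤ) : ℚ) := by
      rw [← hsum, ← mul_assoc, mul_comm (t.den : ℚ) t, Rat.mul_den_eq_num]
    exact_mod_cast this
  have hcop : IsCoprime (t.den : ℤ) t.num := by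
    rw [Int.isCoprime_iff_gcd_eq_one, Int.gcd_comm]
    exact t.reduced
  have hdvd : (t.den : ℤ) ∣ P := hcop.dvd_of_dvd_mul_left (Dvd.intro _ hnd.symm)
  have hPabs : ∏ i, (a i).natAbs = P.natAbs := by
    rw [hP]; exact (map_prod Int.natAbsHom a Finset.univ).symm
  have hdvd' : t.den ∣ P.natAbs := by simpa using Int.natAbs_dvd_natAbs.mpr hdvd
  obtain ⟨k, hk⟩ := hdvd'
  have hk0 : 0 < k := by
    rcases Nat.eq_zero_or_pos k with h | h
    · subst h; simp at hk; exact absurd hk hP0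
    · exact h
  obtain ⟨b, c, hb0, hc0, hcb, hsq⟩ := Nat.sq_mul_squarefree_of_pos hk0
  refine ⟨c, b, hc0, hb0, by rw [hPabs, hk, hcb], ?_⟩
  have hprime : ∀ p : ℕ, p.Prime → p ∣ b → p ∣ t.den * c := by
    intro p hp hpb
    by_cases hpv : p ∣ t.den
    · exact Dvd.dvd.mul_right hpv _
    apply Dvd.dvd.mul_left
    have hpZ : Prime (p : ℤ) := Nat.prime_iff_prime_int.mp hp
    have hpk : p ∣ k := hcb ▸ Dvd.dvd.mul_left hpb _
    have hpP : (p : ℤ) ∣ P := by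
      rw [← Int.dvd_natAbs, hk]; exact_mod_cast Dvd.dvd.mul_left hpk _
    obtain ⟨j, -, hj⟩ := (Prime.dvd_finsetProd_iff hpZ _).mp hpP
    have h1 : (p : ℤ) ∣ t.den * ∑ i, Q i := hnd ▸ Dvd.dvd.mul_left hpP _
    have h2 : (p : ℤ) ∣ ∑ i, Q i := by
      rcases hpZ.dvd_or_dvd h1 with h | h
      · exact absurd (by exact_mod_cast h) hpv
      · exact h
    have h3 : (p : ℤ) ∣ Q j := by
      rw [← Finset.add_sum_erase _ _ (Finset.mem_univ j)] at h2
      refine (dvd_add_left ?_).mp h2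
      apply Finset.dvd_sum
      intro i hi
      refine hj.trans (Finset.dvd_prod_of_mem _ ?_)
      simp only [Finset.mem_erase, Finset.mem_univ, and_true] at hi ⊢
      exact fun h => hi h.symm
    have h4 : ((p ^ 2 : ℕ) : ℤ) ∣ P := by
      rw [← hPQ j]; push_cast; rw [pow_two]; exact mul_dvd_mul hj h3
    have h5 : p ^ 2 ∣ t.den * k := by
      rw [← hk]; exact Int.natCast_dvd.mp h4
    have h6 : p ^ 2 ∣ k :=
      (Nat.Coprime.pow_left 2 ((Nat.Prime.coprime_iff_not_dvd hp).mpr hpv)).dvd_of_dvd_mul_left h5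
    by_contra hpc
    have h7 : p ^ 2 ∣ b := by
      rw [← hcb] at h6
      exact (Nat.Coprime.pow 2 2 ((Nat.Prime.coprime_iff_not_dvd hp).mpr hpc)).dvd_of_dvd_mul_left h6
    rw [pow_two] at h7
    exact hp.one_lt.ne' (by simpa using hsq p h7)
  have hne : t.den * c ≠ 0 := Nat.mul_ne_zero t.den_nz hc0.ne'
  rw [← Nat.prod_primeFactors_of_squarefree hsq]
  apply Finset.prod_primes_dvd
  · intro p hp
    exact (Nat.prime_of_mem_primeFactors hp).prime
  · intro p hp
    exact hprime p (Nat.prime_of_mem_primeFactors hp) (Nat.dvd_of_mem_primeFactors hp)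

theorem USol_prod_le {ι : Type} [Fintype ι] {N : ℕ} {t : ℚ} {a : ι → ℤ} (ha : a ∈ USol ι N t) :
    ∏ i, (a i).natAbs ≤ N ^ Fintype.card ι :=
  Finset.prod_le_pow_card _ _ _ (fun i _ => (ha.1 i).2)

theorem USol_prod_ne {ι : Type} [Fintype ι] {N : ℕ} {t : ℚ} {a : ι → ℤ} (ha : a ∈ USol ι N t) :
    ∏ i, (a i).natAbs ≠ 0 :=
  Finset.prod_ne_zero_iff.mpr (fun i _ => Int.natAbs_ne_zero.mpr (ha.1 i).1)

theorem USol_count (ι : Type) [Fintype ι] (ε : ℝ) (hε : 0 < ε) :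
    ∃ C : ℝ, 1 ≤ C ∧ ∀ N : ℕ, 1 ≤ N → ∀ t : ℚ, ∀ X : ℝ, 0 ≤ X →
      (∀ a ∈ USol ι N t, ((∏ i, (a i).natAbs : ℕ) : ℝ) ≤ X * t.den) →
      ((USol ι N t).ncard : ℝ) ≤ C * (N : ℝ) ^ ε * Real.sqrt X := by
  obtain ⟨C1, hC1, h1⟩ := div_bound_pow (ε / 2) (by positivity) (Fintype.card ι)
  obtain ⟨C2, hC2, h2⟩ := signed_div_bound ι (ε / 2) (by positivity) (Fintype.card ι)
  refine ⟨C1 * C2, by nlinarith, fun N hN t X hX hP => ?_⟩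
  have hN0 : (0 : ℝ) < N := by exact_mod_cast hN
  have hch : ∀ a : ι → ℤ, ∃ c b : ℕ, a ∈ USol ι N t → 0 < c ∧ 0 < b ∧
      ∏ i, (a i).natAbs = t.den * (c ^ 2 * b) ∧ b ∣ t.den * c := by
    intro a
    by_cases h : a ∈ USol ι N t
    · obtain ⟨c, b, h'⟩ := USol_struct h
      exact ⟨c, b, fun _ => h'⟩
    · exact ⟨0, 0, fun h' => absurd h' h⟩
  choose c b hcb using hch
  have hmain := fiber_card (USol ι N t) (USol_finite ι N t) c
    (Finset.Icc 1 ⌊Real.sqrt X⌋₊ : Set ℕ) (Finset.finite_toSet _) ?_ (Real.sqrt X)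
    ((C1 * (N : ℝ) ^ (ε / 2)) * (C2 * (N : ℝ) ^ (ε / 2))) (by positivity) ?_ ?_
  · refine hmain.trans (le_of_eq ?_)
    have : (N : ℝ) ^ ε = (N : ℝ) ^ (ε / 2) * (N : ℝ) ^ (ε / 2) := by
      rw [← Real.rpow_add hN0, add_halves]
    rw [this]; ring
  · intro a ha
    obtain ⟨hc, hb, hprod, hdv⟩ := hcb a ha
    rw [Finset.mem_coe, Finset.mem_Icc]
    refine ⟨hc, Nat.le_floor (Real.le_sqrt_of_sq_le ?_)⟩
    have := hP a ha
    rw [hprod] at this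
    push_cast at this
    have hd : (0 : ℝ) < t.den := by exact_mod_cast t.den_pos
    rw [mul_comm X] at this
    have h3 := le_of_mul_le_mul_left this hd
    have hb1 : (1 : ℝ) ≤ b a := by exact_mod_cast hb
    nlinarith [sq_nonneg (c a : ℝ)]
  · rw [Set.ncard_coe_finset, Nat.card_Icc]
    simp only [add_tsub_cancel_right]
    exact Nat.floor_le (Real.sqrt_nonneg X)
  · intro a ha
    obtain ⟨hc, hb, hprod, hdv⟩ := hcb a ha
    have hsub : {x | x ∈ USol ι N t ∧ c x = c a} ⊆ USol ι N t := fun x hx => hx.1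
    apply fiber_card _ ((USol_finite ι N t).subset hsub) b
      ((t.den * c a).divisors : Set ℕ) (Finset.finite_toSet _) ?_ _ _ (by positivity) ?_ ?_
    · rintro x ⟨hx, hxc⟩
      obtain ⟨hc', hb', hprod', hdv'⟩ := hcb x hx
      rw [Finset.mem_coe, Nat.mem_divisors, ← hxc]
      exact ⟨hdv', Nat.mul_ne_zero t.den_nz hc'.ne'⟩
    · rw [Set.ncard_coe_finset]
      apply h1 N hN _ (Nat.mul_ne_zero t.den_nz hc.ne')
      refine le_trans ?_ (USol_prod_le ha)
      rw [hprod]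
      apply Nat.mul_le_mul_left
      nlinarith
    · rintro y ⟨hy, hyc⟩
      refine le_trans ?_ (h2 N hN _ (USol_prod_ne hy) (USol_prod_le hy))
      norm_cast
      apply Set.ncard_le_ncard _ (signed_div _ (USol_prod_ne hy)).1
      rintro x ⟨⟨hx, hxc⟩, hxb⟩
      intro i
      have e : ∏ i, (y i).natAbs = ∏ i, (x i).natAbs := by
        rw [(hcb x hx).2.2.1, (hcb y hy).2.2.1, hxb, hxc, hyc]
      rw [e, ← Int.natAbs_dvd]
      exact_mod_cast Finset.dvd_prod_of_mem (fun i => (x i).natAbs) (Finset.mem_univ i)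

theorem USol_half (ι : Type) [Fintype ι] (ε : ℝ) (hε : 0 < ε) :
    ∃ C : ℝ, 1 ≤ C ∧ ∀ N : ℕ, 1 ≤ N → ∀ t : ℚ,
      ((USol ι N t).ncard : ℝ) ≤ C * (N : ℝ) ^ ((Fintype.card ι : ℝ) / 2 + ε) := by
  obtain ⟨C, hC1, hC⟩ := USol_count ι ε hε
  refine ⟨C, hC1, fun N hN t => ?_⟩
  have hN0 : (0 : ℝ) < N := by exact_mod_cast hN
  refine (hC N hN t ((N : ℝ) ^ (Fintype.card ι)) (by positivity) ?_).trans (le_of_eq ?_)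
  · intro a ha
    have h1 : ((∏ i, (a i).natAbs : ℕ) : ℝ) ≤ (N : ℝ) ^ (Fintype.card ι) := by
      exact_mod_cast USol_prod_le ha
    have hd : (1 : ℝ) ≤ t.den := by exact_mod_cast t.den_pos
    exact h1.trans (le_mul_of_one_le_right (by positivity) hd)
  · rw [Real.sqrt_eq_rpow, ← Real.rpow_natCast, ← Real.rpow_mul hN0.le, mul_assoc,
      ← Real.rpow_add hN0]
    congr 2; ring

theorem USol_nonzero (ι : Type) [Fintype ι] [Nonempty ι] (ε : ℝ) (hε : 0 < ε) :
    ∃ C : ℝ, 1 ≤ C ∧ ∀ N : ℕ, 1 ≤ N → ∀ t : ℚ, t ≠ 0 →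
      ((USol ι N t).ncard : ℝ) ≤ C * (N : ℝ) ^ (((Fintype.card ι : ℝ) - 1) / 2 + ε) := by
  classical
  obtain ⟨C, hC1, hC⟩ := USol_count ι ε hε
  set m := Fintype.card ι with hm
  have hm1 : 1 ≤ m := Fintype.card_pos
  have hm1' : (1 : ℝ) ≤ m := by exact_mod_cast hm1
  refine ⟨C * Real.sqrt m, ?_, fun N hN t ht => ?_⟩
  · have : 1 ≤ Real.sqrt m := Real.one_le_sqrt.mpr hm1'
    nlinarith
  have hN0 : (0 : ℝ) < N := by exact_mod_cast hN
  refine (hC N hN t (m * (N : ℝ) ^ (m - 1)) (by positivity) ?_).trans (le_of_eq ?_)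
  · intro a ha
    have hex : ∃ i, (a i).natAbs ≤ m * t.den := by
      by_contra hcon
      push Not at hcon
      have hd : (0 : ℚ) < t.den := by exact_mod_cast t.den_pos
      have hmq : (0 : ℚ) < m := by exact_mod_cast hm1
      have h1 : |t| < 1 / t.den := by
        calc |t| = |∑ i, (1 : ℚ) / (a i : ℚ)| := by rw [ha.2]
          _ ≤ ∑ i, |(1 : ℚ) / (a i : ℚ)| :=
              Finset.abs_sum_le_sum_abs _ _
          _ < ∑ i : ι, 1 / ((m : ℚ) * t.den) := by
              apply Finset.sum_lt_sum_of_nonempty Finset.univ_nonempty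
              intro i _
              rw [abs_div, abs_one]
              apply one_div_lt_one_div_of_lt (by positivity)
              rw [← Int.cast_abs, ← Int.natCast_natAbs]
              exact_mod_cast hcon i
          _ = 1 / t.den := by
              rw [Finset.sum_const, Finset.card_univ, ← hm, nsmul_eq_mul]; field_simp
      have h2 : |t| * t.den = |(t.num : ℚ)| := by
        rw [← Rat.mul_den_eq_num, abs_mul, abs_of_pos hd]
      have h3 : (1 : ℚ) ≤ |(t.num : ℚ)| := by
        exact_mod_cast Int.one_le_abs (Rat.num_ne_zero.mpr ht)
      rw [lt_div_iff₀ hd, h2] at h1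
      linarith
    obtain ⟨i, hi⟩ := hex
    have h1 : ∏ i, (a i).natAbs ≤ (m * t.den) * N ^ (m - 1) := by
      rw [← Finset.mul_prod_erase _ _ (Finset.mem_univ i)]
      apply Nat.mul_le_mul hi
      have := Finset.prod_le_pow_card (Finset.univ.erase i) (fun i => (a i).natAbs) N
        (fun i _ => (ha.1 i).2)
      rwa [Finset.card_erase_of_mem (Finset.mem_univ i), Finset.card_univ] at this
    calc ((∏ i, (a i).natAbs : ℕ) : ℝ) ≤ ((m * t.den) * N ^ (m - 1) : ℕ) := by exact_mod_cast h1
      _ = _ := by push_cast; ring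
  · rw [Real.sqrt_mul (by positivity), Real.sqrt_eq_rpow ((N : ℝ) ^ (m - 1)), ← Real.rpow_natCast,
      ← Real.rpow_mul hN0.le, Nat.cast_sub hm1, Real.rpow_add hN0]
    push_cast
    rw [show ((m : ℝ) - 1) * (1 / 2) = (m - 1) / 2 by ring]
    ring

theorem USol_two (ε : ℝ) (hε : 0 < ε) :
    ∃ C : ℝ, 1 ≤ C ∧ ∀ N : ℕ, 1 ≤ N → ∀ t : ℚ, t ≠ 0 →
      ((USol (Fin 2) N t).ncard : ℝ) ≤ C * (N : ℝ) ^ ε := by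
  obtain ⟨C, hC1, hC⟩ := signed_div_bound Unit ε hε 4
  refine ⟨C, hC1, fun N hN t ht => ?_⟩
  rcases (USol (Fin 2) N t).eq_empty_or_nonempty with he | ⟨a₀, ha₀⟩
  · rw [he]; simp; positivity
  have hden : t.den ≤ N ^ 2 := by
    obtain ⟨c, b, hc, hb, hp, -⟩ := USol_struct ha₀
    have := USol_prod_le ha₀
    rw [hp, Fintype.card_fin] at this
    have h1 : 1 ≤ c ^ 2 * b := Nat.mul_pos (by positivity) hb
    nlinarith [t.den_pos]
  have hM0 : t.den ^ 2 ≠ 0 := by have := t.den_pos; positivity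
  refine le_trans ?_ (hC N hN (t.den ^ 2) hM0 ?_)
  · norm_cast
    have hnum : t.num ≠ 0 := Rat.num_ne_zero.mpr ht
    refine Set.ncard_le_ncard_of_injOn (fun a _ => t.num * a 0 - t.den) ?_ ?_ (signed_div _ hM0).1
    · intro a ha i
      refine ⟨t.num * a 1 - t.den, ?_⟩
      have h0 : (a 0 : ℚ) ≠ 0 := by exact_mod_cast (ha.1 0).1
      have h1 : (a 1 : ℚ) ≠ 0 := by exact_mod_cast (ha.1 1).1
      have hs := ha.2
      rw [Fin.sum_univ_two] at hs
      have h2 : (a 0 : ℚ) + a 1 = t * (a 0 * a 1) := by rw [← hs]; field_simp; ring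
      have h3 : (t.den : ℚ) * (a 0 + a 1) = t.num * (a 0 * a 1) := by
        rw [h2, ← Rat.mul_den_eq_num]; ring
      have h4 : (t.den : ℤ) * (a 0 + a 1) = t.num * (a 0 * a 1) := by exact_mod_cast h3
      push_cast
      linear_combination t.num * h4
    · intro a ha a' ha' h
      have h0 := congrFun h ()
      simp only at h0
      have h00 : a 0 = a' 0 := by
        have : t.num * a 0 = t.num * a' 0 := by linarith
        exact mul_left_cancel₀ hnum this
      have hs := ha.2
      have hs' := ha'.2
      rw [Fin.sum_univ_two] at hs hs'
      have h11 : (1 : ℚ) / a 1 = 1 / a' 1 := by rw [h00] at hs; linarith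
      rw [one_div, one_div, inv_inj] at h11
      have h11' : a 1 = a' 1 := by exact_mod_cast h11
      funext i
      fin_cases i
      · exact h00
      · exact h11'
  · calc t.den ^ 2 ≤ (N ^ 2) ^ 2 := Nat.pow_le_pow_left hden 2
      _ = N ^ 4 := by ring

theorem USol_equiv {ι κ : Type} [Fintype ι] [Fintype κ] (e : ι ≃ κ) (N : ℕ) (t : ℚ) :
    (USol ι N t).ncard ≤ (USol κ N t).ncard := by
  refine Set.ncard_le_ncard_of_injOn (fun a k => a (e.symm k)) ?_ ?_ (USol_finite κ N t)
  · intro a ha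
    refine ⟨fun k => ha.1 _, ?_⟩
    rw [← ha.2]
    exact Equiv.sum_comp e.symm (fun i => (1 : ℚ) / (a i : ℚ))
  · intro a _ a' _ h
    funext i
    have := congrFun h (e i)
    simpa using this

theorem USol_three (ι : Type) [Fintype ι] (hι : Fintype.card ι = 3) (ε : ℝ) (hε : 0 < ε) :
    ∃ C : ℝ, 1 ≤ C ∧ ∀ N : ℕ, 1 ≤ N → ∀ t : ℚ,
      ((USol ι N t).ncard : ℝ) ≤ C * (N : ℝ) ^ (1 + ε) := by
  suffices h : ∃ C : ℝ, 1 ≤ C ∧ ∀ N : ℕ, 1 ≤ N → ∀ t : ℚ,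
      ((USol (Fin 3) N t).ncard : ℝ) ≤ C * (N : ℝ) ^ (1 + ε) by
    obtain ⟨C, hC1, hC⟩ := h
    refine ⟨C, hC1, fun N hN t => le_trans ?_ (hC N hN t)⟩
    exact_mod_cast USol_equiv (Fintype.equivFinOfCardEq hι) N t
  obtain ⟨C1, hC1, h1⟩ := USol_nonzero (Fin 3) ε hε
  obtain ⟨C2, hC2, h2⟩ := USol_two ε hε
  refine ⟨C1 + 3 * C2, by linarith, fun N hN t => ?_⟩
  have hN1 : (1 : ℝ) ≤ N := by exact_mod_cast hN
  have hN0 : (0 : ℝ) < N := by linarith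
  by_cases ht : t = 0
  · have h := fiber_card (USol (Fin 3) N t) (USol_finite _ N t) (fun a => a 2)
      (Finset.Icc (-(N : ℤ)) N : Set ℤ) (Finset.finite_toSet _) ?_ (3 * N) (C2 * (N : ℝ) ^ ε)
      (by positivity) ?_ ?_
    · refine h.trans ?_
      rw [Real.rpow_add hN0, Real.rpow_one]
      have : 0 ≤ C1 * (N * (N : ℝ) ^ ε) := by positivity
      linarith
    · intro a ha
      rw [Finset.mem_coe, Finset.mem_Icc]
      have := (ha.1 2).2
      omega
    · rw [Set.ncard_coe_finset, Int.card_Icc]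
      have : ((N : ℤ) + 1 - -(N : ℤ)).toNat ≤ 3 * N := by omega
      exact_mod_cast this
    · intro a ha
      have h2' : (a 2 : ℚ) ≠ 0 := by exact_mod_cast (ha.1 2).1
      refine le_trans ?_ (h2 N hN (-(1 / (a 2 : ℚ))) (by simpa using (ha.1 2).1))
      refine Nat.cast_le.mpr ?_
      refine Set.ncard_le_ncard_of_injOn (fun x => ![x 0, x 1]) ?_ ?_ (USol_finite _ _ _)
      · rintro x ⟨hx, hx2⟩
        refine ⟨?_, ?_⟩
        · intro i
          fin_cases i
          · exact hx.1 0
          · exact hx.1 1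
        · have hs := hx.2
          rw [Fin.sum_univ_three, ht] at hs
          replace hx2 : x 2 = a 2 := hx2
          rw [Fin.sum_univ_two, ← hx2]
          change (1 : ℚ) / (x 0 : ℚ) + 1 / (x 1 : ℚ) = _
          linarith
      · rintro x ⟨hx, hx2⟩ y ⟨hy, hy2⟩ hxy
        replace hx2 : x 2 = a 2 := hx2
        replace hy2 : y 2 = a 2 := hy2
        have e0 := congrFun hxy 0
        have e1 := congrFun hxy 1
        simp only [Matrix.cons_val_zero, Matrix.cons_val_one] at e0 e1
        funext i
        fin_cases i
        · exact e0
        · exact e1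
        · exact hx2.trans hy2.symm
  · refine (h1 N hN t ht).trans ?_
    rw [Fintype.card_fin]
    have : (((3 : ℕ) : ℝ) - 1) / 2 + ε = 1 + ε := by norm_num
    rw [this]
    gcongr
    linarith

/-- Index type of the pairs `i < j`. -/
abbrev Prs (n : ℕ) : Type := {p : Fin n × Fin n // p.1 < p.2}

theorem sym_sum (n : ℕ) (g : Fin n → Fin n → ℚ) (hg : ∀ i j, g i j = g j i) :
    ∑ i, ∑ j, g i j = ∑ i, g i i + 2 * ∑ p : Prs n, g p.1.1 p.1.2 := by
  have h1 : ∑ p : Prs n, g p.1.1 p.1.2 = ∑ i, ∑ j, if i < j then g i j else 0 := by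
    rw [← Fintype.sum_prod_type' (f := fun i j => if i < j then g i j else 0)]
    rw [← Finset.sum_filter (fun p : Fin n × Fin n => p.1 < p.2) (fun p => g p.1 p.2)]
    rw [Finset.sum_subtype (p := fun p : Fin n × Fin n => p.1 < p.2)
      (Finset.univ.filter (fun p : Fin n × Fin n => p.1 < p.2)) (by simp) (fun p => g p.1 p.2)]
  have h2 : ∑ p : Prs n, g p.1.1 p.1.2 = ∑ i, ∑ j, if j < i then g i j else 0 := by
    rw [h1, Finset.sum_comm]
    refine Finset.sum_congr rfl (fun i _ => Finset.sum_congr rfl (fun j _ => ?_))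
    rw [hg]
  have h3 : ∑ i, g i i = ∑ i, ∑ j, if i = j then g i j else 0 := by simp
  rw [two_mul]
  nth_rw 1 [h1]
  rw [h2, h3, ← Finset.sum_add_distrib, ← Finset.sum_add_distrib]
  refine Finset.sum_congr rfl (fun i _ => ?_)
  rw [← Finset.sum_add_distrib, ← Finset.sum_add_distrib]
  refine Finset.sum_congr rfl (fun j _ => ?_)
  rcases lt_trichotomy i j with h | h | h
  · simp [h, h.ne, h.not_gt]
  · simp [h]
  · simp [h, h.ne', h.not_gt]

theorem card_Prs (n : ℕ) : (Fintype.card (Prs n) : ℝ) = (n : ℝ) * (n - 1) / 2 := by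
  have h := sym_sum n (fun _ _ => 1) (fun _ _ => rfl)
  simp only [Finset.sum_const, Finset.card_univ, Fintype.card_fin, nsmul_eq_mul, mul_one] at h
  have h' : (n : ℝ) * n = n + 2 * (Fintype.card (Prs n) : ℝ) := by exact_mod_cast h
  linarith

/-- Integer matrices with prescribed reciprocal trace and reciprocal trace of the square. -/
def ZSol (n N : ℕ) (t s : ℚ) : Set (Matrix (Fin n) (Fin n) ℤ) :=
  {a | (∀ i j, a i j ≠ 0 ∧ (a i j).natAbs ≤ N) ∧ ∑ i, (1 : ℚ) / (a i i : ℚ) = t ∧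
    ∑ i, ∑ j, (1 : ℚ) / ((a i j : ℚ) * (a j i : ℚ)) = s}

theorem ZSol_finite (n N : ℕ) (t s : ℚ) : (ZSol n N t s).Finite := by
  have hfin : {a : Fin n × Fin n → ℤ | ∀ i, (a i).natAbs ≤ N}.Finite := box_finite _ N
  refine Set.Finite.of_finite_image (f := fun a (p : Fin n × Fin n) => a p.1 p.2)
    (hfin.subset ?_) ?_
  · rintro _ ⟨a, ha, rfl⟩ p
    exact (ha.1 _ _).2
  · intro a _ b _ h
    ext i j
    exact congrFun h (i, j)

theorem assemble (n : ℕ) (ε : ℝ) (hε : 0 < ε) :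
    ∃ C : ℝ, 1 ≤ C ∧ ∀ N : ℕ, 1 ≤ N → ∀ t s : ℚ, ∀ B1 B2 : ℝ, 0 ≤ B2 →
      ((USol (Fin n) N t).ncard : ℝ) ≤ B1 →
      (∀ r : ℚ, ((USol (Prs n) (N ^ 2) r).ncard : ℝ) ≤ B2) →
      ((ZSol n N t s).ncard : ℝ) ≤ B1 * (B2 * (C * (N : ℝ) ^ ε)) := by
  obtain ⟨C, hC1, hC⟩ := signed_div_bound (Prs n) ε hε (2 * Fintype.card (Prs n))
  refine ⟨C, hC1, fun N hN t s B1 B2 hB2 h1 h2 => ?_⟩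
  apply fiber_card (ZSol n N t s) (ZSol_finite n N t s) (fun a i => a i i) (USol (Fin n) N t)
    (USol_finite _ _ _) ?_ _ _ (by positivity) h1 ?_
  · intro a ha
    exact ⟨fun i => ha.1 i i, ha.2.1⟩
  intro a ha
  have hsub : {x | x ∈ ZSol n N t s ∧ (fun i => x i i) = (fun i => a i i)} ⊆ ZSol n N t s :=
    fun x hx => hx.1
  have hmem : ∀ x ∈ ZSol n N t s, (fun i => x i i) = (fun i => a i i) →
      (fun p : Prs n => x p.1.1 p.1.2 * x p.1.2 p.1.1) ∈
        USol (Prs n) (N ^ 2) ((s - ∑ i, (1 : ℚ) / ((a i i : ℚ) * (a i i : ℚ))) / 2) := by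
    intro x hx hxa
    refine ⟨fun p => ⟨mul_ne_zero (hx.1 _ _).1 (hx.1 _ _).1, ?_⟩, ?_⟩
    · rw [Int.natAbs_mul, pow_two]
      exact Nat.mul_le_mul (hx.1 _ _).2 (hx.1 _ _).2
    · have hs := hx.2.2
      rw [sym_sum n (fun i j => (1 : ℚ) / ((x i j : ℚ) * (x j i : ℚ)))
        (fun i j => by rw [mul_comm])] at hs
      have e : ∀ i, x i i = a i i := fun i => congrFun hxa i
      simp only [e] at hs
      push_cast
      linarith
  apply fiber_card _ ((ZSol_finite n N t s).subset hsub)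
    (fun x (p : Prs n) => x p.1.1 p.1.2 * x p.1.2 p.1.1)
    (USol (Prs n) (N ^ 2) ((s - ∑ i, (1 : ℚ) / ((a i i : ℚ) * (a i i : ℚ))) / 2))
    (USol_finite _ _ _) ?_ _ _ (by positivity) (h2 _) ?_
  · rintro x ⟨hx, hxa⟩
    exact hmem x hx hxa
  rintro y ⟨hy, hya⟩
  have hy' := hmem y hy hya
  refine le_trans ?_ (hC N hN _ (USol_prod_ne hy') ((USol_prod_le hy').trans_eq (pow_mul _ _ _).symm))
  norm_cast
  refine Set.ncard_le_ncard_of_injOn (fun x (p : Prs n) => x p.1.1 p.1.2) ?_ ?_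
    (signed_div _ (USol_prod_ne hy')).1
  · rintro x ⟨⟨hx, hxa⟩, hxy⟩ p
    have e : x p.1.1 p.1.2 * x p.1.2 p.1.1 = y p.1.1 p.1.2 * y p.1.2 p.1.1 := congrFun hxy p
    rw [← Int.natAbs_dvd]
    have h3 : (x p.1.1 p.1.2).natAbs ∣ (y p.1.1 p.1.2 * y p.1.2 p.1.1).natAbs := by
      rw [← e]; exact Int.natAbs_dvd_natAbs.mpr (Dvd.intro _ rfl)
    exact_mod_cast h3.trans (Finset.dvd_prod_of_mem
      (fun p : Prs n => (y p.1.1 p.1.2 * y p.1.2 p.1.1).natAbs) (Finset.mem_univ p))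
  · rintro x ⟨⟨hx, hxa⟩, hxy⟩ z ⟨⟨hz, hza⟩, hzy⟩ hxz
    have hlt : ∀ i j, i < j → x i j = z i j := fun i j hij => congrFun hxz ⟨(i, j), hij⟩
    ext i j
    rcases lt_trichotomy i j with h | h | h
    · exact hlt i j h
    · subst h
      exact (congrFun hxa i).trans (congrFun hza i).symm
    · have e1 : x j i * x i j = y j i * y i j := congrFun hxy ⟨(j, i), h⟩
      have e2 : z j i * z i j = y j i * y i j := congrFun hzy ⟨(j, i), h⟩
      have e3 := e1.trans e2.symm
      rw [hlt j i h] at e3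
      exact mul_left_cancel₀ (hz.1 j i).1 e3

theorem ZSol_two (ε : ℝ) (hε : 0 < ε) :
    ∃ C : ℝ, 1 ≤ C ∧ ∀ N : ℕ, 1 ≤ N → ∀ s : ℚ, s ≠ 0 →
      ((ZSol 2 N 0 s).ncard : ℝ) ≤ C * (N : ℝ) ^ ε := by
  obtain ⟨C1, hC1, h1⟩ := USol_two (ε / 4) (by positivity)
  obtain ⟨C2, hC2, h2⟩ := signed_div_bound (Fin 2) (ε / 2) (by positivity) 4
  refine ⟨C1 * C2, by nlinarith, fun N hN s hs => ?_⟩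
  have hN0 : (0 : ℝ) < N := by exact_mod_cast hN
  have hdiag : ∀ x ∈ ZSol 2 N 0 s, x 1 1 = - x 0 0 := by
    intro x hx
    have h := hx.2.1
    rw [Fin.sum_univ_two] at h
    have h' : (1 : ℚ) / x 1 1 = 1 / (-(x 0 0)) := by rw [one_div_neg_eq_neg_one_div]; linarith
    rw [one_div, one_div, inv_inj] at h'
    exact_mod_cast h'
  have hmem : ∀ x ∈ ZSol 2 N 0 s, ![x 0 0 ^ 2, x 0 1 * x 1 0] ∈ USol (Fin 2) (N ^ 2) (s / 2) := by
    intro x hx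
    refine ⟨?_, ?_⟩
    · intro i
      fin_cases i
      · refine ⟨pow_ne_zero 2 (hx.1 0 0).1, ?_⟩
        change (x 0 0 ^ 2).natAbs ≤ _
        rw [Int.natAbs_pow]
        exact Nat.pow_le_pow_left (hx.1 0 0).2 2
      · refine ⟨mul_ne_zero (hx.1 0 1).1 (hx.1 1 0).1, ?_⟩
        change (x 0 1 * x 1 0).natAbs ≤ _
        rw [Int.natAbs_mul, pow_two]
        exact Nat.mul_le_mul (hx.1 0 1).2 (hx.1 1 0).2
    · have h := hx.2.2
      simp only [Fin.sum_univ_two, hdiag x hx] at h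
      simp only [Fin.sum_univ_two, Matrix.cons_val_zero, Matrix.cons_val_one]
      push_cast at h ⊢
      rw [← h, neg_mul_neg, mul_comm (x 1 0 : ℚ)]
      ring
  have hmain := fiber_card (ZSol 2 N 0 s) (ZSol_finite _ _ _ _)
    (fun x => ![x 0 0 ^ 2, x 0 1 * x 1 0]) (USol (Fin 2) (N ^ 2) (s / 2)) (USol_finite _ _ _) hmem _
    (C2 * (N : ℝ) ^ (ε / 2)) (by positivity)
    (h1 (N ^ 2) (Nat.one_le_pow _ _ hN) (s / 2) (by simpa using hs)) ?_
  · refine hmain.trans (le_of_eq ?_)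
    push_cast
    rw [← Real.rpow_natCast, ← Real.rpow_mul hN0.le]
    have : (N : ℝ) ^ ε = (N : ℝ) ^ (((2 : ℕ) : ℝ) * (ε / 4)) * (N : ℝ) ^ (ε / 2) := by
      rw [← Real.rpow_add hN0]; congr 1; push_cast; ring
    rw [this]; ring
  · intro y hy
    have hy' := hmem y hy
    refine le_trans ?_ (h2 N hN _ (USol_prod_ne hy') ((USol_prod_le hy').trans_eq (by
      rw [Fintype.card_fin, ← pow_mul])))
    norm_cast
    refine Set.ncard_le_ncard_of_injOn (fun x => ![x 0 0, x 0 1]) ?_ ?_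
      (signed_div _ (USol_prod_ne hy')).1
    · rintro x ⟨hx, hxy⟩ i
      rw [← hxy, ← Int.natAbs_dvd, Fin.prod_univ_two]
      norm_cast
      fin_cases i
      · change (x 0 0).natAbs ∣ (x 0 0 ^ 2).natAbs * (x 0 1 * x 1 0).natAbs
        rw [← Int.natAbs_mul]
        exact Int.natAbs_dvd_natAbs.mpr ⟨x 0 0 * (x 0 1 * x 1 0), by ring⟩
      · change (x 0 1).natAbs ∣ (x 0 0 ^ 2).natAbs * (x 0 1 * x 1 0).natAbs
        rw [← Int.natAbs_mul]
        exact Int.natAbs_dvd_natAbs.mpr ⟨x 0 0 ^ 2 * x 1 0, by ring⟩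
    · rintro x ⟨hx, hxy⟩ z ⟨hz, hzy⟩ hxz
      have e0 : x 0 0 = z 0 0 := congrFun hxz 0
      have e1 : x 0 1 = z 0 1 := congrFun hxz 1
      have f1 : x 0 1 * x 1 0 = z 0 1 * z 1 0 := congrFun (hxy.trans hzy.symm) 1
      rw [e1] at f1
      have e2 : x 1 0 = z 1 0 := mul_left_cancel₀ (hz.1 0 1).1 f1
      have e3 : x 1 1 = z 1 1 := by rw [hdiag x hx, hdiag z hz, e0]
      ext i j
      fin_cases i <;> fin_cases j
      · exact e0
      · exact e1
      · exact e2
      · exact e3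

theorem final_bound (n : ℕ) (α β ε : ℝ) (hε : 0 < ε) (Pt : ℚ → Prop)
    (h1 : ∀ δ : ℝ, 0 < δ → ∃ C : ℝ, 1 ≤ C ∧ ∀ N : ℕ, 1 ≤ N → ∀ t : ℚ, Pt t →
      ((USol (Fin n) N t).ncard : ℝ) ≤ C * (N : ℝ) ^ (α + δ))
    (h2 : ∀ δ : ℝ, 0 < δ → ∃ C : ℝ, 1 ≤ C ∧ ∀ N : ℕ, 1 ≤ N → ∀ t : ℚ,
      ((USol (Prs n) N t).ncard : ℝ) ≤ C * (N : ℝ) ^ (β + δ)) :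
    ∃ C : ℝ, 1 ≤ C ∧ ∀ N : ℕ, 1 ≤ N → ∀ t s : ℚ, Pt t →
      ((ZSol n N t s).ncard : ℝ) ≤ C * (N : ℝ) ^ (α + 2 * β + ε) := by
  obtain ⟨C1, hC1, h1⟩ := h1 (ε / 4) (by positivity)
  obtain ⟨C2, hC2, h2⟩ := h2 (ε / 4) (by positivity)
  obtain ⟨C3, hC3, h3⟩ := assemble n (ε / 4) (by positivity)
  refine ⟨C1 * (C2 * C3), one_le_mul_of_one_le_of_one_le hC1
    (one_le_mul_of_one_le_of_one_le hC2 hC3), fun N hN t s ht => ?_⟩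
  have hN0 : (0 : ℝ) < N := by exact_mod_cast hN
  refine (h3 N hN t s _ (C2 * ((N ^ 2 : ℕ) : ℝ) ^ (β + ε / 4)) (by positivity) (h1 N hN t ht)
    (fun r => h2 (N ^ 2) (Nat.one_le_pow _ _ hN) r)).trans (le_of_eq ?_)
  push_cast
  rw [← Real.rpow_natCast (N : ℝ) 2, ← Real.rpow_mul hN0.le]
  have : (N : ℝ) ^ (α + 2 * β + ε) =
      (N : ℝ) ^ (α + ε / 4) * ((N : ℝ) ^ (((2 : ℕ) : ℝ) * (β + ε / 4)) * (N : ℝ) ^ (ε / 4)) := by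
    rw [← Real.rpow_add hN0, ← Real.rpow_add hN0]; congr 1; push_cast; ring
  rw [this]; ring

/-- Matrices of unit fractions with given characteristic polynomial. -/
def MSol (n : ℕ) (H : ℝ) (f : Polynomial ℚ) : Set (Matrix (Fin n) (Fin n) ℚ) :=
  {A | (∀ i j, A i j ∈ Egyptian H) ∧ A.charpoly = f}

theorem MSol_le (n : ℕ) (H : ℝ) (hH : 2 ≤ H) (f : Polynomial ℚ) (A₀ : Matrix (Fin n) (Fin n) ℚ)
    (hA₀ : A₀ ∈ MSol n H f) :
    (MSol n H f).ncard ≤ (ZSol n ⌊H⌋₊ A₀.trace (A₀ * A₀).trace).ncard := by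
  have hx : ∀ x ∈ Egyptian H, (x⁻¹.num ≠ 0 ∧ x⁻¹.num.natAbs ≤ ⌊H⌋₊) ∧ (1 : ℚ) / (x⁻¹.num : ℚ) = x := by
    rintro x ⟨a, ha, haH, rfl⟩
    have e : ((1 : ℚ) / (a : ℚ))⁻¹.num = a := by simp
    rw [e]
    refine ⟨⟨ha, Nat.le_floor ?_⟩, rfl⟩
    rw [Nat.cast_natAbs]
    exact_mod_cast haH
  refine Set.ncard_le_ncard_of_injOn (fun A i j => (A i j)⁻¹.num) ?_ ?_ (ZSol_finite _ _ _ _)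
  · intro A hA
    have hc : A.charpoly = A₀.charpoly := hA.2.trans hA₀.2.symm
    refine ⟨fun i j => (hx _ (hA.1 i j)).1, ?_, ?_⟩
    · rw [Matrix.trace_eq_neg_charpoly_nextCoeff, ← hc, ← Matrix.trace_eq_neg_charpoly_nextCoeff]
      exact Finset.sum_congr rfl (fun i _ => (hx _ (hA.1 i i)).2)
    · rw [← trace_sq_of_charpoly A A₀ hc]
      refine Finset.sum_congr rfl (fun i _ => ?_)
      rw [Matrix.diag_apply, Matrix.mul_apply]
      refine Finset.sum_congr rfl (fun j _ => ?_)
      have e1 := (hx _ (hA.1 i j)).2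
      have e2 := (hx _ (hA.1 j i)).2
      calc (1 : ℚ) / (((A i j)⁻¹.num : ℚ) * ((A j i)⁻¹.num : ℚ))
          = (1 / ((A i j)⁻¹.num : ℚ)) * (1 / ((A j i)⁻¹.num : ℚ)) := by
            rw [one_div_mul_one_div]
        _ = A i j * A j i := by rw [e1, e2]
  · intro A hA B hB hAB
    ext i j
    have h := congrFun (congrFun hAB i) j
    rw [← (hx _ (hA.1 i j)).2, ← (hx _ (hB.1 i j)).2]
    simp only at h
    rw [h]

theorem MSol_bound (n : ℕ) (x : ℝ) (hx : 0 ≤ x) (Pt : ℚ → Prop) (Ps : ℚ → Prop)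
    (h : ∃ C : ℝ, 1 ≤ C ∧ ∀ N : ℕ, 1 ≤ N → ∀ t s : ℚ, Pt t → Ps s →
      ((ZSol n N t s).ncard : ℝ) ≤ C * (N : ℝ) ^ x) :
    ∃ C : ℝ, 1 ≤ C ∧ ∀ H : ℝ, H ≥ 2 → ∀ f : Polynomial ℚ,
      (∀ A ∈ MSol n H f, Pt A.trace ∧ Ps (A * A).trace) →
      ((MSol n H f).ncard : ℝ) ≤ C * H ^ x := by
  obtain ⟨C, hC1, hC⟩ := h
  refine ⟨C, hC1, fun H hH f hf => ?_⟩
  have hH0 : 0 ≤ H := by linarith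
  rcases (MSol n H f).eq_empty_or_nonempty with he | ⟨A₀, hA₀⟩
  · rw [he, Set.ncard_empty, Nat.cast_zero]; positivity
  have hN : 1 ≤ ⌊H⌋₊ := Nat.le_floor (by push_cast; linarith)
  calc ((MSol n H f).ncard : ℝ) ≤ ((ZSol n ⌊H⌋₊ A₀.trace (A₀ * A₀).trace).ncard : ℝ) := by
        exact_mod_cast MSol_le n H hH f A₀ hA₀
    _ ≤ C * (⌊H⌋₊ : ℝ) ^ x := hC _ hN _ _ (hf A₀ hA₀).1 (hf A₀ hA₀).2
    _ ≤ C * H ^ x := by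
        gcongr
        exact Nat.floor_le hH0

theorem USol_one (ι : Type) [Fintype ι] (hι : Fintype.card ι = 1) (N : ℕ) (t : ℚ) :
    (USol ι N t).ncard ≤ 1 := by
  rw [Set.ncard_le_one (USol_finite _ _ _)]
  intro a ha b hb
  obtain ⟨i, hi⟩ := Fintype.card_eq_one_iff.mp hι
  have hs := ha.2.trans hb.2.symm
  rw [Fintype.sum_eq_single i (fun j hj => absurd (hi j) hj),
    Fintype.sum_eq_single i (fun j hj => absurd (hi j) hj), one_div, one_div, inv_inj] at hs
  funext j
  rw [hi j]
  exact_mod_cast hs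

theorem case_two (ε : ℝ) (hε : 0 < ε) :
    ∃ C : ℝ, 1 ≤ C ∧ ∀ H : ℝ, H ≥ 2 → ∀ f : Polynomial ℚ, f ≠ Polynomial.X ^ 2 →
      ((MSol 2 H f).ncard : ℝ) ≤ C * H ^ ε := by
  obtain ⟨C1, hC1, h1⟩ := MSol_bound 2 (0 + 2 * 0 + ε) (by linarith) (fun t => t ≠ 0) (fun _ => True) (by
    obtain ⟨C, hC1, hC⟩ := final_bound 2 0 0 ε hε (fun t => t ≠ 0)
      (fun δ hδ => by simpa using USol_two δ hδ)
      (fun δ hδ => ⟨1, le_rfl, fun N hN t => by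
        have h : Fintype.card (Prs 2) = 1 := by
          have := card_Prs 2
          norm_num at this
          exact_mod_cast this
        have h1 : ((USol (Prs 2) N t).ncard : ℝ) ≤ 1 := by exact_mod_cast USol_one _ h N t
        have hN1 : (1 : ℝ) ≤ N := by exact_mod_cast hN
        have h2 : (1 : ℝ) ≤ (N : ℝ) ^ (0 + δ) := Real.one_le_rpow hN1 (by linarith)
        linarith⟩)
    exact ⟨C, hC1, fun N hN t s ht _ => hC N hN t s ht⟩)
  obtain ⟨C2, hC2, h2⟩ := MSol_bound 2 ε hε.le (fun t => t = 0) (fun s => s ≠ 0) (by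
    obtain ⟨C, hC1, hC⟩ := ZSol_two ε hε
    refine ⟨C, hC1, fun N hN t s ht hs => ?_⟩
    subst ht
    exact hC N hN s hs)
  refine ⟨C1 + C2, by linarith, fun H hH f hf => ?_⟩
  have hH0 : 0 ≤ H ^ ε := Real.rpow_nonneg (by linarith) _
  have htr : ∀ A ∈ MSol 2 H f, A.trace = - f.nextCoeff := by
    intro A hA
    rw [Matrix.trace_eq_neg_charpoly_nextCoeff, hA.2]
  by_cases ht : f.nextCoeff = 0
  · have := h2 H hH f (fun A hA => ⟨by rw [htr A hA, ht, neg_zero], fun hs => hf ?_⟩)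
    · nlinarith
    · have htA : A.trace = 0 := by rw [htr A hA, ht, neg_zero]
      rw [← hA.2, Matrix.charpoly_fin_two, htA]
      have hdet : A.det = 0 := by
        rw [Matrix.trace_fin_two] at hs htA
        simp only [Matrix.mul_apply, Fin.sum_univ_two] at hs
        rw [Matrix.det_fin_two]
        linear_combination (-1 / 2 : ℚ) * hs + (1 / 2 : ℚ) * (A 0 0 + A 1 1) * htA
      simp [hdet]
  · have := h1 H hH f (fun A hA => ⟨by rw [htr A hA]; exact neg_ne_zero.mpr ht, trivial⟩)
    rw [show (0 : ℝ) + 2 * 0 + ε = ε by ring] at this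
    nlinarith

theorem case_three (ε : ℝ) (hε : 0 < ε) :
    ∃ C : ℝ, 1 ≤ C ∧ ∀ H : ℝ, H ≥ 2 → ∀ f : Polynomial ℚ,
      ((MSol 3 H f).ncard : ℝ) ≤ C * H ^ (3 + ε) := by
  obtain ⟨C1, hC1, h1⟩ := MSol_bound 3 (1 + 2 * 1 + ε) (by linarith) (fun _ => True) (fun _ => True) (by
    obtain ⟨C, hC1, hC⟩ := final_bound 3 1 1 ε hε (fun _ => True)
      (fun δ hδ => by simpa using USol_three (Fin 3) (by simp) δ hδ)
      (fun δ hδ => USol_three (Prs 3) (by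
          have := card_Prs 3
          norm_num at this
          exact_mod_cast this) δ hδ)
    exact ⟨C, hC1, fun N hN t s ht _ => hC N hN t s ht⟩)
  refine ⟨C1, hC1, fun H hH f => ?_⟩
  have := h1 H hH f (fun _ _ => ⟨trivial, trivial⟩)
  rwa [show (1 : ℝ) + 2 * 1 + ε = 3 + ε by ring] at this

theorem case_zero (n : ℕ) (ε : ℝ) (hε : 0 < ε) :
    ∃ C : ℝ, 1 ≤ C ∧ ∀ H : ℝ, H ≥ 2 → ∀ f : Polynomial ℚ,
      ((MSol n H f).ncard : ℝ) ≤ C * H ^ ((n ^ 2 : ℝ) / 2 + ε) := by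
  have he : (n : ℝ) / 2 + 2 * ((Fintype.card (Prs n) : ℝ) / 2) + ε = (n ^ 2 : ℝ) / 2 + ε := by
    rw [card_Prs]; ring
  obtain ⟨C1, hC1, h1⟩ := MSol_bound n ((n ^ 2 : ℝ) / 2 + ε) (by positivity)
    (fun _ => True) (fun _ => True) (by
    obtain ⟨C, hC1, hC⟩ := final_bound n ((n : ℝ) / 2) ((Fintype.card (Prs n) : ℝ) / 2) ε hε
      (fun _ => True)
      (fun δ hδ => by simpa using USol_half (Fin n) δ hδ)
      (fun δ hδ => USol_half (Prs n) δ hδ)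
    rw [he] at hC
    exact ⟨C, hC1, fun N hN t s ht _ => hC N hN t s ht⟩)
  exact ⟨C1, hC1, fun H hH f => h1 H hH f (fun _ _ => ⟨trivial, trivial⟩)⟩

theorem case_nonzero (n : ℕ) (hn : 2 ≤ n) (ε : ℝ) (hε : 0 < ε) :
    ∃ C : ℝ, 1 ≤ C ∧ ∀ H : ℝ, H ≥ 2 → ∀ f : Polynomial ℚ, f.nextCoeff ≠ 0 →
      ((MSol n H f).ncard : ℝ) ≤ C * H ^ ((n ^ 2 : ℝ) / 2 - 1 / 2 + ε) := by
  have hn' : (2 : ℝ) ≤ n := by exact_mod_cast hn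
  have : Nonempty (Fin n) := ⟨⟨0, by omega⟩⟩
  have he : ((n : ℝ) - 1) / 2 + 2 * ((Fintype.card (Prs n) : ℝ) / 2) + ε =
      (n ^ 2 : ℝ) / 2 - 1 / 2 + ε := by
    rw [card_Prs]; ring
  obtain ⟨C1, hC1, h1⟩ := MSol_bound n ((n ^ 2 : ℝ) / 2 - 1 / 2 + ε) (by nlinarith)
    (fun t => t ≠ 0) (fun _ => True) (by
    obtain ⟨C, hC1, hC⟩ := final_bound n (((n : ℝ) - 1) / 2) ((Fintype.card (Prs n) : ℝ) / 2) ε hε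
      (fun t => t ≠ 0)
      (fun δ hδ => by simpa using USol_nonzero (Fin n) δ hδ)
      (fun δ hδ => USol_half (Prs n) δ hδ)
    rw [he] at hC
    exact ⟨C, hC1, fun N hN t s ht _ => hC N hN t s ht⟩)
  refine ⟨C1, hC1, fun H hH f hf => h1 H hH f (fun A hA => ⟨?_, trivial⟩)⟩
  rw [Matrix.trace_eq_neg_charpoly_nextCoeff, hA.2]
  exact neg_ne_zero.mpr hf

theorem stmt16 (n : ℕ) (hn : n ≥ 2) :
    ∀ ε > (0 : ℝ), ∃ C : ℝ, ∀ H : ℝ, H ≥ 2 →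
      ∀ f : Polynomial ℚ, f.Monic → f.natDegree = n →
      (n = 2 → f ≠ Polynomial.X ^ 2 →
        (Set.ncard {A : Matrix (Fin n) (Fin n) ℚ |
            (∀ i j, A i j ∈ Egyptian H) ∧ A.charpoly = f} : ℝ) ≤ C * H ^ ε) ∧
      (n = 3 →
        (Set.ncard {A : Matrix (Fin n) (Fin n) ℚ |
            (∀ i j, A i j ∈ Egyptian H) ∧ A.charpoly = f} : ℝ) ≤ C * H ^ ((3 : ℝ) + ε)) ∧
      (n ≥ 4 → f.coeff (n - 1) ≠ 0 →
        (Set.ncard {A : Matrix (Fin n) (Fin n) ℚ |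
            (∀ i j, A i j ∈ Egyptian H) ∧ A.charpoly = f} : ℝ) ≤
          C * H ^ ((n ^ 2 : ℝ) / 2 - 1 / (2 * n - 2) + ε)) ∧
      (n ≥ 4 → f.coeff (n - 1) = 0 →
        (Set.ncard {A : Matrix (Fin n) (Fin n) ℚ |
            (∀ i j, A i j ∈ Egyptian H) ∧ A.charpoly = f} : ℝ) ≤
          C * H ^ ((n ^ 2 : ℝ) / 2 + ε)) := by
  intro ε hε
  obtain ⟨C2, hC2, h2⟩ := case_two ε hε
  obtain ⟨C3, hC3, h3⟩ := case_three ε hε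
  obtain ⟨C4, hC4, h4⟩ := case_zero n ε hε
  obtain ⟨C5, hC5, h5⟩ := case_nonzero n hn ε hε
  refine ⟨C2 + C3 + C4 + C5, fun H hH f hf hfd => ⟨?_, ?_, ?_, ?_⟩⟩
  · intro hn2 hfX
    subst hn2
    exact (h2 H hH f hfX).trans (by gcongr; linarith)
  · intro hn3
    subst hn3
    exact (h3 H hH f).trans (by gcongr; linarith)
  · intro hn4 hc
    have hnext : f.nextCoeff ≠ 0 := by
      rw [Polynomial.nextCoeff_of_natDegree_pos (by omega), hfd]; exact hc
    refine (h5 H hH f hnext).trans ?_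
    have hn4' : (4 : ℝ) ≤ n := by exact_mod_cast hn4
    have hle : 1 / (2 * (n : ℝ) - 2) ≤ 1 / 2 :=
      one_div_le_one_div_of_le (by norm_num) (by linarith)
    have hH1 : 1 ≤ H := by linarith
    gcongr
    linarith
  · intro hn4 _
    exact (h4 H hH f).trans (by gcongr; linarith)
end

section
/- Let A > 0 be a real constant. For every ε > 0 there exists a constant C = C(A, ε) such that the following holds for all real H ≥ 2 and all integers Q_0 and nonzero integers Q_1, …, Q_n with |Q_i| ≤ H^A for i = 1, …, n: the number of n-tuples (x_1, …, x_n) of nonzero integers with |x_i| ≤ H for all i satisfying Σ_{i=1}^n Q_i/x_i = Q_0 is (i) at most one if n = 1; (ii) at most C·H^{ε} if n = 2 and Q_0 ≠ 0, and at most C·H if n = 2 and Q_0 = 0; (iii) at most C·H^{1+ε} if n = 3. -/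
theorem divisor_bound_s18 (δ : ℝ) (hδ : 0 < δ) :
    ∃ C : ℝ, 0 < C ∧ ∀ n : ℕ, n ≠ 0 → (n.divisors.card : ℝ) ≤ C * (n : ℝ) ^ δ := by
  obtain ⟨N, hN⟩ := exists_nat_gt ((2 : ℝ) ^ (1 / δ))
  set c : ℝ := δ * Real.log 2 with hc
  have hcpos : 0 < c := mul_pos hδ (Real.log_pos (by norm_num))
  set K : ℝ := 1 + 1 / c with hK
  have hK1 : 1 ≤ K := by
    have : 0 < 1 / c := by positivity
    linarith
  refine ⟨K ^ N, by positivity, fun n hn => ?_⟩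
  have key : ∀ p ∈ n.primeFactors, ((n.factorization p : ℝ) + 1) ≤
      (if p < N then K else 1) * ((p : ℝ) ^ (n.factorization p)) ^ δ := by
    intro p hp
    have hp2 : 2 ≤ p := (Nat.prime_of_mem_primeFactors hp).two_le
    have hp2' : (2 : ℝ) ≤ p := by exact_mod_cast hp2
    generalize n.factorization p = k
    have e : ((p : ℝ) ^ k) ^ δ = ((p : ℝ) ^ δ) ^ k := by
      rw [← Real.rpow_natCast, ← Real.rpow_natCast, ← Real.rpow_mul (by positivity),
        ← Real.rpow_mul (by positivity), mul_comm]
    rw [e]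
    split_ifs with h
    · have h1 : (2 : ℝ) ^ δ ≤ (p : ℝ) ^ δ := Real.rpow_le_rpow (by norm_num) hp2' hδ.le
      have h2 : ((2 : ℝ) ^ δ) ^ k ≤ ((p : ℝ) ^ δ) ^ k :=
        pow_le_pow_left₀ (by positivity) h1 k
      have h3 : 1 + c * k ≤ ((2 : ℝ) ^ δ) ^ k := by
        rw [← Real.rpow_natCast, ← Real.rpow_mul (by norm_num), Real.rpow_def_of_pos (by norm_num)]
        have := Real.add_one_le_exp (Real.log 2 * (δ * k))
        rw [hc]
        linarith
      have h4 : (k : ℝ) + 1 ≤ K * (1 + c * k) := by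
        have : K * (1 + c * k) = 1 + c * k + 1 / c + k := by
          rw [hK]; field_simp; ring
        rw [this]
        have : 0 < 1 / c := by positivity
        have : 0 ≤ c * k := by positivity
        linarith
      calc (k : ℝ) + 1 ≤ K * (1 + c * k) := h4
        _ ≤ _ := by gcongr; exact h3.trans h2
    · rw [one_mul]
      have hpN : (N : ℝ) ≤ p := by exact_mod_cast not_lt.mp h
      have h1 : (2 : ℝ) ≤ (p : ℝ) ^ δ := by
        calc (2 : ℝ) = ((2 : ℝ) ^ (1 / δ)) ^ δ := by
              rw [← Real.rpow_mul (by norm_num), one_div_mul_cancel hδ.ne', Real.rpow_one]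
          _ ≤ _ := Real.rpow_le_rpow (by positivity) (hN.le.trans hpN) hδ.le
      have h2 : ((2 : ℝ)) ^ k ≤ ((p : ℝ) ^ δ) ^ k := pow_le_pow_left₀ (by positivity) h1 k
      have h3 : (k : ℝ) + 1 ≤ 2 ^ k := by
        exact_mod_cast (Nat.lt_two_pow_self (n := k))
      linarith
  rw [Nat.card_divisors hn]
  push_cast
  calc ∏ p ∈ n.primeFactors, ((n.factorization p : ℝ) + 1)
      ≤ ∏ p ∈ n.primeFactors, ((if p < N then K else 1) * ((p : ℝ) ^ (n.factorization p)) ^ δ) :=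
        Finset.prod_le_prod (fun _ _ => by positivity) key
    _ = (∏ p ∈ n.primeFactors, (if p < N then K else 1)) *
        (∏ p ∈ n.primeFactors, (p : ℝ) ^ (n.factorization p)) ^ δ := by
        rw [Finset.prod_mul_distrib, Real.finsetProd_rpow _ _ (fun _ _ => by positivity)]
    _ = (∏ p ∈ n.primeFactors, (if p < N then K else 1)) * (n : ℝ) ^ δ := by
        congr 2
        have := Nat.prod_factorization_pow_eq_self hn
        conv_rhs => rw [← this]
        rw [Finsupp.prod, Nat.support_factorization]
        push_cast
        rfl
    _ ≤ K ^ N * (n : ℝ) ^ δ := by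
        gcongr
        rw [Finset.prod_ite, Finset.prod_const_one, mul_one, Finset.prod_const]
        apply pow_le_pow_right₀ hK1
        calc _ ≤ (Finset.range N).card := Finset.card_le_card (by intro p; simp)
          _ = N := by simp

theorem two_count (a b q r : ℤ) (ha : a ≠ 0) (hb : b ≠ 0) (hq : q ≠ 0) (hr : r ≠ 0)
    (s : Finset (ℤ × ℤ)) (h : ∀ p ∈ s, b * (q * p.2 + r * p.1) = a * p.1 * p.2) :
    s.card ≤ 2 * (b ^ 2 * q * r).natAbs.divisors.card := by
  have hM : b ^ 2 * q * r ≠ 0 := by positivity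
  set D := (b ^ 2 * q * r).natAbs.divisors with hD
  have hfac : ∀ p ∈ s, (a * p.1 - b * q) * (a * p.2 - b * r) = b ^ 2 * q * r := by
    intro p hp
    linear_combination (-a) * h p hp
  calc s.card ≤ (D.image (fun d : ℕ => (d : ℤ)) ∪ D.image (fun d : ℕ => -(d : ℤ))).card := by
        apply Finset.card_le_card_of_injOn (fun p => a * p.1 - b * q)
        · intro p hp
          have hdvd : (a * p.1 - b * q).natAbs ∈ D := by
            rw [hD, Nat.mem_divisors]
            exact ⟨Int.natAbs_dvd_natAbs.mpr ⟨_, (hfac p hp).symm⟩, by simpa using hM⟩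
          simp only [Finset.coe_union, Finset.coe_image, Set.mem_union, Set.mem_image,
            Finset.mem_coe]
          rcases Int.natAbs_eq (a * p.1 - b * q) with h' | h'
          · exact Or.inl ⟨_, hdvd, h'.symm⟩
          · exact Or.inr ⟨_, hdvd, h'.symm⟩
        · intro p hp p' hp' e
          simp only at e
          have h1 := hfac p hp
          have h2 := hfac p' hp'
          have e1 : p.1 = p'.1 := mul_left_cancel₀ ha (by linarith)
          have hne : a * p'.1 - b * q ≠ 0 := by
            intro h0
            rw [h0, zero_mul] at h2
            exact hM h2.symm
          rw [e, ← h2] at h1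
          have e2 := mul_left_cancel₀ hne h1
          have e3 : p.2 = p'.2 := mul_left_cancel₀ ha (by linarith)
          exact Prod.ext e1 e3
    _ ≤ D.card + D.card :=
        (Finset.card_union_le _ _).trans (add_le_add Finset.card_image_le Finset.card_image_le)
    _ = 2 * D.card := by ring

theorem Icc_count (H : ℝ) (hH : 2 ≤ H) : ((Finset.Icc (-⌊H⌋) ⌊H⌋).card : ℝ) ≤ 3 * H := by
  have h0 : 0 ≤ ⌊H⌋ := Int.floor_nonneg.mpr (by linarith)
  have h1 := Int.floor_le H
  rw [Int.card_Icc]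
  have : (((⌊H⌋ + 1 - -⌊H⌋).toNat : ℤ) : ℝ) = 2 * ⌊H⌋ + 1 := by
    rw [Int.toNat_of_nonneg (by omega)]; push_cast; ring
  have h2 : (((⌊H⌋ + 1 - -⌊H⌋).toNat : ℕ) : ℝ) = 2 * ⌊H⌋ + 1 := by
    rw [← this]; norm_cast
  rw [h2]; linarith

theorem mem_Icc_of (H : ℝ) (x : ℤ) (h : |(x : ℝ)| ≤ H) : x ∈ Finset.Icc (-⌊H⌋) ⌊H⌋ := by
  rw [Finset.mem_Icc, ← abs_le]
  exact Int.le_floor.mpr (by push_cast; exact h)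

theorem zero_count (H : ℝ) (hH : 2 ≤ H) (q r : ℤ) (hq : q ≠ 0)
    (s : Finset (ℤ × ℤ)) (h : ∀ p ∈ s, q * p.2 + r * p.1 = 0)
    (hs : ∀ p ∈ s, |(p.1 : ℝ)| ≤ H) : (s.card : ℝ) ≤ 3 * H := by
  refine le_trans ?_ (Icc_count H hH)
  norm_cast
  apply Finset.card_le_card_of_injOn (fun p => p.1)
  · intro p hp
    exact mem_Icc_of H _ (hs p hp)
  · intro p hp p' hp' e
    simp only at e
    have h1 := h p hp
    have h2 := h p' hp'
    rw [e] at h1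
    exact Prod.ext e (mul_left_cancel₀ hq (by linarith))

theorem sol_finite (n : ℕ) (H : ℝ) (P : (Fin n → ℤ) → Prop) :
    {x : Fin n → ℤ | (∀ i, x i ≠ 0 ∧ |(x i : ℝ)| ≤ H) ∧ P x}.Finite := by
  apply (Fintype.piFinset (fun _ : Fin n => Finset.Icc (-⌊H⌋) ⌊H⌋)).finite_toSet.subset
  intro x hx
  simp only [Finset.mem_coe, Fintype.mem_piFinset]
  exact fun i => mem_Icc_of H _ (hx.1 i).2

theorem M_bound (A ε H C₀ : ℝ) (hA : 0 < A) (hε : 0 < ε) (hH : 2 ≤ H) (hC : 0 < C₀)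
    (hd : ∀ n : ℕ, n ≠ 0 → (n.divisors.card : ℝ) ≤ C₀ * (n : ℝ) ^ (ε / (2 + 2 * A)))
    (b q r : ℤ) (hb0 : b ≠ 0) (hq0 : q ≠ 0) (hr0 : r ≠ 0)
    (hb : |(b : ℝ)| ≤ H) (hq : |(q : ℝ)| ≤ H ^ A) (hr : |(r : ℝ)| ≤ H ^ A) :
    ((b ^ 2 * q * r).natAbs.divisors.card : ℝ) ≤ C₀ * H ^ ε := by
  have hM : b ^ 2 * q * r ≠ 0 := by positivity
  refine (hd _ (by simpa using hM)).trans ?_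
  have hHp : 0 < H := by linarith
  have e : (((b ^ 2 * q * r).natAbs : ℕ) : ℝ) ≤ H ^ (2 + 2 * A) := by
    rw [Nat.cast_natAbs]
    push_cast
    rw [abs_mul, abs_mul, abs_pow]
    calc |(b : ℝ)| ^ 2 * |(q : ℝ)| * |(r : ℝ)| ≤ H ^ 2 * H ^ A * H ^ A := by gcongr
      _ = H ^ (2 + 2 * A) := by
        rw [← Real.rpow_natCast, ← Real.rpow_add hHp, ← Real.rpow_add hHp]
        congr 1; push_cast; ring
  have := Real.rpow_le_rpow (by positivity) e (by positivity : 0 ≤ ε / (2 + 2 * A))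
  rw [← Real.rpow_mul hHp.le, mul_div_cancel₀ _ (by positivity)] at this
  gcongr

theorem pair_count (s : Finset (Fin 2 → ℤ)) :
    (s.image (fun x => (x 0, x 1))).card = s.card := by
  apply Finset.card_image_of_injective
  intro x y h
  simp only [Prod.mk.injEq] at h
  ext i
  fin_cases i
  · exact h.1
  · exact h.2

theorem eq_two (q r Q₀ x y : ℤ) (hx : x ≠ 0) (hy : y ≠ 0)
    (h : (q : ℚ) / x + (r : ℚ) / y = Q₀) : 1 * (q * y + r * x) = Q₀ * x * y := by
  have hx' : (x : ℚ) ≠ 0 := by exact_mod_cast hx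
  have hy' : (y : ℚ) ≠ 0 := by exact_mod_cast hy
  field_simp at h
  have h' : (1 : ℚ) * (q * y + r * x) = Q₀ * x * y := by linear_combination h
  exact_mod_cast h'

theorem eq_three (q r t Q₀ x y z : ℤ) (hx : x ≠ 0) (hy : y ≠ 0) (hz : z ≠ 0)
    (h : (q : ℚ) / x + (r : ℚ) / y + (t : ℚ) / z = Q₀) :
    z * (q * y + r * x) = (Q₀ * z - t) * x * y := by
  have hx' : (x : ℚ) ≠ 0 := by exact_mod_cast hx
  have hy' : (y : ℚ) ≠ 0 := by exact_mod_cast hy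
  have hz' : (z : ℚ) ≠ 0 := by exact_mod_cast hz
  field_simp at h
  have h' : (z : ℚ) * (q * y + r * x) = (Q₀ * z - t) * x * y := by linear_combination h
  exact_mod_cast h'


theorem stmt18 (A : ℝ) (hA : A > 0) :
    ∀ ε > (0 : ℝ), ∃ C : ℝ, ∀ H : ℝ, H ≥ 2 →
      ∀ n : ℕ, ∀ Q₀ : ℤ, ∀ Q : Fin n → ℤ,
      (∀ i, Q i ≠ 0) → (∀ i, (|Q i| : ℝ) ≤ H ^ A) →
      (n = 1 →
        Set.ncard {x : Fin n → ℤ |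
            (∀ i, x i ≠ 0 ∧ (|x i| : ℝ) ≤ H) ∧
            ∑ i, (Q i : ℚ) / (x i : ℚ) = (Q₀ : ℚ)} ≤ 1) ∧
      (n = 2 → Q₀ ≠ 0 →
        (Set.ncard {x : Fin n → ℤ |
            (∀ i, x i ≠ 0 ∧ (|x i| : ℝ) ≤ H) ∧
            ∑ i, (Q i : ℚ) / (x i : ℚ) = (Q₀ : ℚ)} : ℝ) ≤ C * H ^ ε) ∧
      (n = 2 → Q₀ = 0 →
        (Set.ncard {x : Fin n → ℤ |
            (∀ i, x i ≠ 0 ∧ (|x i| : ℝ) ≤ H) ∧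
            ∑ i, (Q i : ℚ) / (x i : ℚ) = (Q₀ : ℚ)} : ℝ) ≤ C * H) ∧
      (n = 3 →
        (Set.ncard {x : Fin n → ℤ |
            (∀ i, x i ≠ 0 ∧ (|x i| : ℝ) ≤ H) ∧
            ∑ i, (Q i : ℚ) / (x i : ℚ) = (Q₀ : ℚ)} : ℝ) ≤ C * H ^ ((1 : ℝ) + ε)) := by
  intro ε hε
  obtain ⟨C₀, hC₀, hd⟩ := divisor_bound_s18 (ε / (2 + 2 * A)) (by positivity)
  refine ⟨6 * C₀ + 3, fun H hH n Q₀ Q hQ0 hQ => ?_⟩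
  have hHp : 0 < H := by linarith
  have hHε : 0 < H ^ ε := Real.rpow_pos_of_pos hHp _
  have hfin := sol_finite n H (fun x => ∑ i, (Q i : ℚ) / (x i : ℚ) = (Q₀ : ℚ))
  have hmem : ∀ x ∈ hfin.toFinset, (∀ i, x i ≠ 0 ∧ |(x i : ℝ)| ≤ H) ∧
      ∑ i, (Q i : ℚ) / (x i : ℚ) = (Q₀ : ℚ) := fun x hx => by simpa using hx
  rw [Set.ncard_eq_toFinset_card _ hfin]
  generalize hfin.toFinset = s at hmem
  clear hfin
  refine ⟨?_, ?_, ?_, ?_⟩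
  · rintro rfl
    rw [Finset.card_le_one]
    intro x hx y hy
    obtain ⟨hx0, hx⟩ := hmem x hx
    obtain ⟨hy0, hy⟩ := hmem y hy
    simp only [Finset.univ_unique, Fin.default_eq_zero, Finset.sum_singleton] at hx hy
    have h1 : (x 0 : ℚ) ≠ 0 := by exact_mod_cast (hx0 0).1
    have h2 : (y 0 : ℚ) ≠ 0 := by exact_mod_cast (hy0 0).1
    have h3 : (Q 0 : ℚ) ≠ 0 := by exact_mod_cast hQ0 0
    have h4 : (Q 0 : ℚ) / (x 0 : ℚ) = Q 0 / y 0 := hx.trans hy.symm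
    rw [div_eq_div_iff h1 h2] at h4
    have h5 := mul_left_cancel₀ h3 h4
    ext i
    fin_cases i
    exact_mod_cast h5.symm
  · rintro rfl h0
    rw [← pair_count]
    have h1 := two_count Q₀ 1 (Q 0) (Q 1) h0 one_ne_zero (hQ0 0) (hQ0 1)
      (s.image (fun x => (x 0, x 1))) (by
        intro p hp
        obtain ⟨x, hx, rfl⟩ := Finset.mem_image.mp hp
        obtain ⟨hx0, hx⟩ := hmem x hx
        rw [Fin.sum_univ_two] at hx
        exact eq_two _ _ _ _ _ (hx0 0).1 (hx0 1).1 hx)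
    have h2 := M_bound A ε H C₀ hA hε hH hC₀ hd 1 (Q 0) (Q 1) one_ne_zero (hQ0 0) (hQ0 1)
      (by simp; linarith) (hQ 0) (hQ 1)
    have h3 : ((s.image (fun x => (x 0, x 1))).card : ℝ) ≤
      2 * ((1 ^ 2 * Q 0 * Q 1).natAbs.divisors.card : ℝ) := by exact_mod_cast h1
    have h4 : 0 < C₀ * H ^ ε := by positivity
    linarith
  · rintro rfl h0
    rw [← pair_count]
    have h1 := zero_count H hH (Q 0) (Q 1) (hQ0 0)
      (s.image (fun x => (x 0, x 1))) (by
        intro p hp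
        obtain ⟨x, hx, rfl⟩ := Finset.mem_image.mp hp
        obtain ⟨hx0, hx⟩ := hmem x hx
        rw [Fin.sum_univ_two] at hx
        have := eq_two _ _ _ _ _ (hx0 0).1 (hx0 1).1 hx
        rw [h0] at this
        linarith) (by
        intro p hp
        obtain ⟨x, hx, rfl⟩ := Finset.mem_image.mp hp
        exact ((hmem x hx).1 0).2)
    have : 0 < C₀ * H := by positivity
    linarith
  · rintro rfl
    have heq : ∀ x ∈ s, x 2 * (Q 0 * x 1 + Q 1 * x 0) = (Q₀ * x 2 - Q 2) * x 0 * x 1 := by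
      intro x hx
      obtain ⟨hx0, hx⟩ := hmem x hx
      rw [Fin.sum_univ_three] at hx
      exact eq_three _ _ _ _ _ _ _ (hx0 0).1 (hx0 1).1 (hx0 2).1 hx
    rw [← Finset.card_filter_add_card_filter_not (s := s) (fun x => Q₀ * x 2 - Q 2 = 0)]
    set s1 := s.filter (fun x => Q₀ * x 2 - Q 2 = 0) with hs1
    set s2 := s.filter (fun x => ¬ (Q₀ * x 2 - Q 2 = 0)) with hs2
    have b1 : (s1.card : ℝ) ≤ 3 * H := by
      have : (s1.image (fun x => (x 0, x 1))).card = s1.card := by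
        apply Finset.card_image_of_injOn
        intro x hx y hy h
        simp only [Prod.mk.injEq] at h
        have hx2 := (Finset.mem_filter.mp hx).2
        have hy2 := (Finset.mem_filter.mp hy).2
        have hne : Q₀ ≠ 0 := by
          rintro rfl
          apply hQ0 2
          linarith
        have h22 : x 2 = y 2 := mul_left_cancel₀ hne (by linarith)
        ext i
        fin_cases i
        · exact h.1
        · exact h.2
        · exact h22
      rw [← this]
      apply zero_count H hH (Q 0) (Q 1) (hQ0 0)
      · intro p hp
        obtain ⟨x, hx, rfl⟩ := Finset.mem_image.mp hp
        obtain ⟨hx, hx2⟩ := Finset.mem_filter.mp hx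
        have h1 := heq x hx
        rw [hx2, zero_mul, zero_mul] at h1
        exact (mul_eq_zero.mp h1).resolve_left ((hmem x hx).1 2).1
      · intro p hp
        obtain ⟨x, hx, rfl⟩ := Finset.mem_image.mp hp
        exact ((hmem x (Finset.mem_filter.mp hx).1).1 0).2
    have b2 : (s2.card : ℝ) ≤ 3 * H * (2 * (C₀ * H ^ ε)) := by
      have hmaps : ∀ x ∈ s2, x 2 ∈ Finset.Icc (-⌊H⌋) ⌊H⌋ := fun x hx =>
        mem_Icc_of H _ ((hmem x (Finset.mem_filter.mp hx).1).1 2).2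
      rw [Finset.card_eq_sum_card_fiberwise hmaps]
      push_cast
      have hfib : ∀ c ∈ Finset.Icc (-⌊H⌋) ⌊H⌋,
          ((s2.filter (fun x => x 2 = c)).card : ℝ) ≤ 2 * (C₀ * H ^ ε) := by
        intro c _
        set f := s2.filter (fun x => x 2 = c) with hf
        rcases f.eq_empty_or_nonempty with h0 | ⟨w, hw⟩
        · rw [h0]; simp; positivity
        obtain ⟨hw, hwc⟩ := Finset.mem_filter.mp hw
        obtain ⟨hw, hwn⟩ := Finset.mem_filter.mp hw
        have hw2 := (hmem w hw).1 2
        rw [hwc] at hwn hw2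
        have hcard : (f.image (fun x => (x 0, x 1))).card = f.card := by
          apply Finset.card_image_of_injOn
          intro x hx y hy h
          simp only [Prod.mk.injEq] at h
          have hx2 := (Finset.mem_filter.mp hx).2
          have hy2 := (Finset.mem_filter.mp hy).2
          ext i
          fin_cases i
          · exact h.1
          · exact h.2
          · exact hx2.trans hy2.symm
        have h1 := two_count (Q₀ * c - Q 2) c (Q 0) (Q 1) hwn hw2.1 (hQ0 0) (hQ0 1)
          (f.image (fun x => (x 0, x 1))) (by
            intro p hp
            obtain ⟨x, hx, rfl⟩ := Finset.mem_image.mp hp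
            obtain ⟨hx, hxc⟩ := Finset.mem_filter.mp hx
            have := heq x (Finset.mem_filter.mp hx).1
            rw [hxc] at this
            exact this)
        have h2 := M_bound A ε H C₀ hA hε hH hC₀ hd c (Q 0) (Q 1) hw2.1 (hQ0 0) (hQ0 1)
          hw2.2 (hQ 0) (hQ 1)
        rw [hcard] at h1
        have h3 : (f.card : ℝ) ≤
          2 * ((c ^ 2 * Q 0 * Q 1).natAbs.divisors.card : ℝ) := by exact_mod_cast h1
        linarith
      refine (Finset.sum_le_card_nsmul _ _ _ hfib).trans ?_
      rw [nsmul_eq_mul]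
      exact mul_le_mul_of_nonneg_right (Icc_count H hH) (by positivity)
    have h1 : 1 ≤ H ^ ε := Real.one_le_rpow (by linarith) hε.le
    rw [Real.rpow_add hHp, Real.rpow_one]
    push_cast
    have : H ≤ H * H ^ ε := le_mul_of_one_le_right hHp.le h1
    nlinarith
end
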